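/- arXiv:1503.05863 — 2 statements merged into one kernel-verified Lean document; each statement's English description precedes it below -/
import Mathlib

section
/- Let d ≥ 1, 2 ≤ p < ∞, and k₁, k₂ ∈ ℝ. Then there exists a constant C > 0 such that ‖(1−Δ)^{k₂/2}(ℱf)‖_{L^p(ℝ^d)} ≤ C·‖(1−Δ)^{k₁/2} f‖_{L^p(ℝ^d)} for every Schwartz function f on ℝ^d, if and only if k₁ ≥ 0 and k₂ ≤ −2d(1/2 − 1/p). -/
open MeasureTheory Complex Real
open scoped ENNReal RealInnerProductSpace

noncomputable section

abbrev E (d : ℕ) : Type := EuclideanSpace ℝ (Fin d)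

/-- The Fourier transform `ℱu(ξ) = ∫ exp(-i x·ξ) u(x) dx`. -/
def FT (d : ℕ) (u : E d → ℂ) (ξ : E d) : ℂ :=
  ∫ x, Complex.exp (-Complex.I * (⟪x, ξ⟫ : ℂ)) * u x

/-- The Bessel potential `(1-Δ)^{k/2} u = ℱ⁻¹((1+|ξ|²)^{k/2} ℱu)`. -/
def bessel (d : ℕ) (k : ℝ) (u : E d → ℂ) (x : E d) : ℂ :=
  (((2 * π) ^ d : ℝ) : ℂ)⁻¹ *
    ∫ ξ, Complex.exp (Complex.I * (⟪x, ξ⟫ : ℂ)) * (((1 + ‖ξ‖ ^ 2) ^ (k / 2) : ℝ) : ℂ) *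
      FT d u ξ

/-!
Up to a dilation, `(1 - Δ)^{k₂/2} ℱf` is the Fourier transform of `⟨x⟩^{k₂} f`, where
`⟨x⟩ = (1 + |x|²)^{1/2}`.

*Sufficiency.* The weight `φ = ⟨x⟩^{-d}` lies in weak `L¹`, so the Hörmander–Paley inequality bounds
the `L^q` norm of `φ^{(2-q)/q} ℱg` by that of `g` for `1 < q ≤ 2`: for the measure `φ² dx`, the
operator `g ↦ ℱg / φ` is of weak type `(1, 1)` and strong type `(2, 2)`, and Marcinkiewicz
interpolation applies. By duality, `‖ℱ(⟨x⟩^{k₂} f)‖_p ≤ C ‖f‖_p` at the critical order `k₂`. For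
`k₁ > 0` the operator `(1 - Δ)^{-k₁/2}` is convolution with a probability measure, a Gamma mixture
of Gaussians, hence a contraction of `L^p`.

*Necessity.* Modulating `f` to high frequency does not change `‖ℱ(⟨x⟩^{k₂} f)‖_p` but makes
`‖(1 - Δ)^{k₁/2} f‖_p` tend to zero if `k₁ < 0`. For the bound on `k₂`, take `f` vanishing near the
origin and replace it by `f(c x)` with `c → 0`: after rescaling, `⟨x⟩^{k₂}` turns into the
homogeneous weight `|x|^{k₂}`, and comparing powers of `c` with Fatou's lemma leaves only the
stated range.
-/

open Filter Topology
open scoped FourierTransform SchwartzMap NNReal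

section RealInterpolation

theorem lintegral_Ioo_rpow {s r : ℝ} (hs : -1 < s) (hr : 0 ≤ r) :
    ∫⁻ t in Set.Ioo 0 r, ENNReal.ofReal (t ^ s) = ENNReal.ofReal (r ^ (s + 1) / (s + 1)) := by
  have hi : IntegrableOn (fun t : ℝ ↦ t ^ s) (Set.Ioc 0 r) :=
    (intervalIntegrable_iff_integrableOn_Ioc_of_le hr).1
      (intervalIntegral.intervalIntegrable_rpow' hs)
  rw [IntegrableOn, ← restrict_Ioo_eq_restrict_Ioc] at hi
  rw [← ofReal_integral_eq_lintegral_ofReal hi, restrict_Ioo_eq_restrict_Ioc,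
    ← intervalIntegral.integral_of_le hr, integral_rpow (Or.inl hs),
    Real.zero_rpow (by linarith), sub_zero]
  filter_upwards [ae_restrict_mem measurableSet_Ioo] with t ht
  exact Real.rpow_nonneg ht.1.le _

theorem lintegral_Ici_rpow {s r : ℝ} (hs : s < -1) (hr : 0 < r) :
    ∫⁻ t in Set.Ici r, ENNReal.ofReal (t ^ s) = ENNReal.ofReal (-r ^ (s + 1) / (s + 1)) := by
  rw [← restrict_Ioi_eq_restrict_Ici,
    ← ofReal_integral_eq_lintegral_ofReal (integrableOn_Ioi_rpow_of_lt hs hr),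
    integral_Ioi_rpow_of_lt hs hr]
  filter_upwards [ae_restrict_mem measurableSet_Ioi] with t ht
  exact Real.rpow_nonneg (hr.trans ht).le _

variable {α β : Type*} [MeasurableSpace α] [MeasurableSpace β] {μ : Measure α} {ν : Measure β}

theorem lintegral_mul_setLIntegral_swap [SFinite μ] [SFinite ν] {S : Set (α × β)}
    (hS : MeasurableSet S) {w : α → ℝ≥0∞} (hw : Measurable w) {g : β → ℝ≥0∞} (hg : Measurable g) :
    ∫⁻ t, w t * ∫⁻ x in {x | (t, x) ∈ S}, g x ∂ν ∂μ =
      ∫⁻ x, g x * ∫⁻ t in {t | (t, x) ∈ S}, w t ∂μ ∂ν := by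
  have hfst (t : α) : MeasurableSet {x | (t, x) ∈ S} := measurable_prodMk_left hS
  have hsnd (x : β) : MeasurableSet {t | (t, x) ∈ S} := measurable_prodMk_right hS
  have hm : Measurable (S.indicator fun z ↦ w z.1 * g z.2) := by fun_prop (disch := exact hS)
  calc _ = ∫⁻ t, ∫⁻ x, S.indicator (fun z ↦ w z.1 * g z.2) (t, x) ∂ν ∂μ := by
        refine lintegral_congr fun t ↦ ?_
        rw [← lintegral_const_mul _ hg, ← lintegral_indicator (hfst t)]
        rfl
    _ = ∫⁻ x, ∫⁻ t, S.indicator (fun z ↦ w z.1 * g z.2) (t, x) ∂μ ∂ν :=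
        lintegral_lintegral_swap hm.aemeasurable
    _ = _ := by
        refine lintegral_congr fun x ↦ ?_
        rw [← lintegral_const_mul _ hw, ← lintegral_indicator (hsnd x)]
        refine lintegral_congr fun t ↦ ?_
        simp only [Set.indicator, Set.mem_ofPred_eq, mul_comm]

variable {v : α → ℝ} {q : ℝ}

theorem lintegral_rpow_mul_setLIntegral_lt [SFinite μ] (hv : Measurable v) (hv0 : ∀ x, 0 ≤ v x)
    (hq : 1 < q) :
    ∫⁻ t in Set.Ioi (0 : ℝ), ENNReal.ofReal (t ^ (q - 2)) *
        ∫⁻ x in {x | t < v x}, ENNReal.ofReal (v x) ∂μ =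
      ENNReal.ofReal (q - 1)⁻¹ * ∫⁻ x, ENNReal.ofReal (v x ^ q) ∂μ := by
  have hS : MeasurableSet {z : ℝ × α | z.1 < v z.2} :=
    measurableSet_lt measurable_fst (hv.comp measurable_snd)
  refine (lintegral_mul_setLIntegral_swap hS (by fun_prop) (by fun_prop)).trans ?_
  rw [← lintegral_const_mul _ (by fun_prop)]
  refine lintegral_congr fun x ↦ ?_
  change _ * ∫⁻ t in Set.Iio (v x), _ ∂(volume.restrict _) = _
  rw [Measure.restrict_restrict measurableSet_Iio, Set.inter_comm, Set.Ioi_inter_Iio,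
    lintegral_Ioo_rpow (by linarith) (hv0 x), ← ENNReal.ofReal_mul (hv0 x),
    ← ENNReal.ofReal_mul (by simp; linarith)]
  congr 1
  rcases (hv0 x).eq_or_lt with h | h
  · rw [← h]; simp [Real.zero_rpow (show q ≠ 0 by linarith)]
  · rw [show q - 2 + 1 = q - 1 by ring, Real.rpow_sub_one h.ne']
    field_simp

theorem lintegral_rpow_mul_setLIntegral_le [SFinite μ] (hv : Measurable v) (hv0 : ∀ x, 0 ≤ v x)
    (hq0 : 0 < q) (hq : q < 2) :
    ∫⁻ t in Set.Ioi (0 : ℝ), ENNReal.ofReal (t ^ (q - 3)) *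
        ∫⁻ x in {x | v x ≤ t}, ENNReal.ofReal (v x ^ 2) ∂μ =
      ENNReal.ofReal (2 - q)⁻¹ * ∫⁻ x, ENNReal.ofReal (v x ^ q) ∂μ := by
  have hS : MeasurableSet {z : ℝ × α | v z.2 ≤ z.1} :=
    measurableSet_le (hv.comp measurable_snd) measurable_fst
  refine (lintegral_mul_setLIntegral_swap hS (by fun_prop) (by fun_prop)).trans ?_
  rw [← lintegral_const_mul _ (by fun_prop)]
  refine lintegral_congr fun x ↦ ?_
  change _ * ∫⁻ t in Set.Ici (v x), _ ∂(volume.restrict _) = _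
  rcases (hv0 x).eq_or_lt with h | h
  · rw [← h]; simp [Real.zero_rpow hq0.ne']
  rw [Measure.restrict_restrict measurableSet_Ici, Set.inter_eq_left.2 (Set.Ici_subset_Ioi.2 h),
    lintegral_Ici_rpow (by linarith) h, ← ENNReal.ofReal_mul (by positivity),
    ← ENNReal.ofReal_mul (by simp; linarith)]
  congr 1
  rw [show q - 3 + 1 = q - 2 by ring, Real.rpow_sub h, Real.rpow_two]
  have : q - 2 ≠ 0 := by linarith
  have : 2 - q ≠ 0 := by linarith
  field_simp
  ring

-- The truncation argument in the proof of the Marcinkiewicz interpolation theorem.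
theorem lintegral_rpow_le_of_measure_lt_le [SFinite μ] {w : β → ℝ} (hw : Measurable w)
    (hw0 : ∀ y, 0 ≤ w y) (hv : Measurable v) (hv0 : ∀ x, 0 ≤ v x) (hq1 : 1 < q) (hq2 : q < 2)
    {A B : ℝ≥0}
    (hwv : ∀ t : ℝ, 0 < t → ν {y | t < w y} ≤
      A * ENNReal.ofReal t⁻¹ * ∫⁻ x in {x | t < v x}, ENNReal.ofReal (v x) ∂μ +
        B * ENNReal.ofReal (t ^ 2)⁻¹ * ∫⁻ x in {x | v x ≤ t}, ENNReal.ofReal (v x ^ 2) ∂μ) :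
    ∫⁻ y, ENNReal.ofReal (w y ^ q) ∂ν ≤
      ENNReal.ofReal q * (A * ENNReal.ofReal (q - 1)⁻¹ + B * ENNReal.ofReal (2 - q)⁻¹) *
        ∫⁻ x, ENNReal.ofReal (v x ^ q) ∂μ := by
  have hpt : ∀ t ∈ Set.Ioi (0 : ℝ), ν {y | t < w y} * ENNReal.ofReal (t ^ (q - 1)) ≤
      A * (ENNReal.ofReal (t ^ (q - 2)) * ∫⁻ x in {x | t < v x}, ENNReal.ofReal (v x) ∂μ) +
        B * (ENNReal.ofReal (t ^ (q - 3)) *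
          ∫⁻ x in {x | v x ≤ t}, ENNReal.ofReal (v x ^ 2) ∂μ) := by
    intro t (ht : 0 < t)
    have h2 : ENNReal.ofReal (t ^ (q - 2)) =
        ENNReal.ofReal t⁻¹ * ENNReal.ofReal (t ^ (q - 1)) := by
      rw [← ENNReal.ofReal_mul (by positivity), ← Real.rpow_neg_one, ← Real.rpow_add ht]
      congr 2; ring
    have h3 : ENNReal.ofReal (t ^ (q - 3)) =
        ENNReal.ofReal (t ^ 2)⁻¹ * ENNReal.ofReal (t ^ (q - 1)) := by
      rw [← ENNReal.ofReal_mul (by positivity), ← Real.rpow_natCast, ← Real.rpow_neg ht.le,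
        ← Real.rpow_add ht]
      congr 2; push_cast; ring
    calc _ ≤ _ := mul_le_mul_left (hwv t ht) _
      _ = _ := by rw [h2, h3]; ring
  have hmA : Measurable fun t : ℝ ↦ ENNReal.ofReal (t ^ (q - 2)) *
      ∫⁻ x in {x | t < v x}, ENNReal.ofReal (v x) ∂μ := by
    have hanti : Antitone fun t : ℝ ↦ ∫⁻ x in {x | t < v x}, ENNReal.ofReal (v x) ∂μ :=
      fun _ _ hst ↦ lintegral_mono_set fun _ ↦ hst.trans_lt
    exact (by fun_prop : Measurable fun t : ℝ ↦ ENNReal.ofReal (t ^ (q - 2))).mul hanti.measurable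
  rw [lintegral_rpow_eq_lintegral_meas_lt_mul ν (ae_of_all _ hw0) hw.aemeasurable
    (by linarith : 0 < q)]
  refine (mul_le_mul_right (setLIntegral_mono' measurableSet_Ioi hpt) _).trans_eq ?_
  rw [lintegral_add_left (hmA.const_mul _), lintegral_const_mul' _ _ ENNReal.coe_ne_top,
    lintegral_const_mul' _ _ ENNReal.coe_ne_top, lintegral_rpow_mul_setLIntegral_lt hv hv0 hq1,
    lintegral_rpow_mul_setLIntegral_le hv hv0 (by linarith) hq2]
  ring

end RealInterpolation

section FourierIntegral

variable {V F : Type*} [NormedAddCommGroup V] [InnerProductSpace ℝ V] [FiniteDimensional ℝ V]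
  [MeasurableSpace V] [BorelSpace V]

section NormedSpace

variable [NormedAddCommGroup F] [NormedSpace ℂ F] {u v : V → F}

theorem continuous_fourier (hu : Integrable u) : Continuous (𝓕 u) :=
  VectorFourier.fourierIntegral_continuous Real.continuous_fourierChar
    (by exact continuous_inner) hu

theorem fourier_add_of_integrable (hu : Integrable u) (hv : Integrable v) :
    𝓕 (u + v) = 𝓕 u + 𝓕 v :=
  VectorFourier.fourierIntegral_add (L := innerₗ V) Real.continuous_fourierChar
    continuous_inner hu hv

theorem enorm_fourier_le_lintegral_enorm (u : V → F) (ξ : V) : ‖𝓕 u ξ‖ₑ ≤ ∫⁻ x, ‖u x‖ₑ := by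
  rw [Real.fourier_eq]
  refine (enorm_integral_le_lintegral_enorm _).trans_eq (lintegral_congr fun x ↦ ?_)
  rw [← ofReal_norm, Circle.norm_smul, ofReal_norm]

theorem integral_smul_fourier_eq [CompleteSpace F] {g : V → ℂ} (hg : Integrable g)
    (hu : Integrable u) : ∫ ξ, g ξ • 𝓕 u ξ = ∫ x, 𝓕 g x • u x := by
  have h := VectorFourier.integral_fourierIntegral_smul_eq_flip (L := innerₗ V)
    Real.continuous_fourierChar continuous_inner hg hu
  simpa only [flip_innerₗ] using! h.symm

end NormedSpace

variable [NormedAddCommGroup F] [InnerProductSpace ℂ F] [CompleteSpace F] {u : V → F}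

theorem fourier_ae_eq_fourier_toLp (h1 : Integrable u) (h2 : MemLp u 2) :
    𝓕 u =ᵐ[volume] (𝓕 (h2.toLp u) : Lp F 2 (volume : Measure V)) := by
  refine ae_eq_of_integral_contDiff_smul_eq (continuous_fourier h1).locallyIntegrable
    ((Lp.memLp _).locallyIntegrable (by norm_num)) fun g hg hgs ↦ ?_
  let φ : 𝓢(V, ℂ) := (hgs.comp_left (g := ((↑) : ℝ → ℂ)) (by simp)).toSchwartzMap
    (Complex.ofRealCLM.contDiff.comp hg)
  have hφ (x : V) : φ x = (g x : ℂ) := rfl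
  have hT := congrArg (fun T ↦ T φ) (Lp.fourier_toTemperedDistribution_eq (h2.toLp u))
  simp only [TemperedDistribution.fourier_apply, Lp.toTemperedDistribution_apply] at hT
  calc ∫ x, g x • 𝓕 u x = ∫ x, φ x • 𝓕 u x := by simp [hφ]
    _ = ∫ x, 𝓕 (φ : V → ℂ) x • u x := integral_smul_fourier_eq φ.integrable h1
    _ = ∫ x, (𝓕 φ) x • (h2.toLp u) x := by
      refine integral_congr_ae ?_
      filter_upwards [h2.coeFn_toLp] with x hx
      rw [hx, SchwartzMap.fourier_coe]
    _ = _ := by rw [hT]; simp [hφ]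

theorem eLpNorm_fourier_two (h1 : Integrable u) (h2 : MemLp u 2) :
    eLpNorm (𝓕 u) 2 = eLpNorm u 2 := by
  rw [eLpNorm_congr_ae (fourier_ae_eq_fourier_toLp h1 h2), ← eLpNorm_congr_ae h2.coeFn_toLp,
    ← ENNReal.toReal_eq_toReal_iff' (Lp.eLpNorm_ne_top _) (Lp.eLpNorm_ne_top _), ← Lp.norm_def,
    ← Lp.norm_def, Lp.norm_fourier_eq]

theorem lintegral_enorm_fourier_sq (h1 : Integrable u) (h2 : MemLp u 2) :
    ∫⁻ ξ, ‖𝓕 u ξ‖ₑ ^ (2 : ℝ) = ∫⁻ x, ‖u x‖ₑ ^ (2 : ℝ) := by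
  have h := eLpNorm_fourier_two h1 h2
  rw [eLpNorm_eq_lintegral_rpow_enorm_toReal (by simp) (by simp),
    eLpNorm_eq_lintegral_rpow_enorm_toReal (by simp) (by simp)] at h
  simpa using ENNReal.rpow_left_injective (by simp) h

end FourierIntegral

section PaleyInequality

theorem ofReal_norm_rpow {F : Type*} [SeminormedAddGroup F] (x : F) {p : ℝ} (hp : 0 ≤ p) :
    ENNReal.ofReal (‖x‖ ^ p) = ‖x‖ₑ ^ p := by
  rw [← ENNReal.ofReal_rpow_of_nonneg (norm_nonneg _) hp, ofReal_norm]

variable {V F : Type*} [NormedAddCommGroup V] [InnerProductSpace ℝ V] [FiniteDimensional ℝ V]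
  [MeasurableSpace V] [BorelSpace V] {φ : V → ℝ} {K : ℝ≥0}

theorem setLIntegral_sq_le_of_measure_lt_le {α : Type*} [MeasurableSpace α] {μ : Measure α}
    {φ : α → ℝ} {K : ℝ≥0} (hφm : Measurable φ) (hφ0 : ∀ x, 0 ≤ φ x)
    (hφ : ∀ s : ℝ, 0 < s → μ {x | s < φ x} ≤ K * ENNReal.ofReal s⁻¹) (s : ℝ) :
    ∫⁻ x in {x | φ x < s}, ENNReal.ofReal (φ x ^ 2) ∂μ ≤ 2 * K * ENNReal.ofReal s := by
  have hlayer (t : ℝ) (ht : t ∈ Set.Ioi 0) :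
      (μ.restrict {x | φ x < s}) {x | t < φ x} * ENNReal.ofReal (t ^ (2 - 1 : ℝ)) ≤
        (Set.Iio s).indicator (fun _ ↦ (K : ℝ≥0∞)) t := by
    have hK := mul_le_mul_left
      ((Measure.restrict_le_self (s := {x | φ x < s}) {x | t < φ x}).trans (hφ t ht))
      (ENNReal.ofReal t)
    rw [mul_assoc, ← ENNReal.ofReal_mul (inv_nonneg.2 (le_of_lt ht)),
      inv_mul_cancel₀ (ne_of_gt ht), ENNReal.ofReal_one, mul_one] at hK
    norm_num
    by_cases hts : t < s
    · simpa [hts] using hK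
    · have : {x | t < φ x} ∩ {x | φ x < s} = ∅ := by
        ext x; simpa using fun h ↦ (not_lt.1 hts).trans h.le
      rw [Measure.restrict_apply (measurableSet_lt measurable_const hφm), this]
      simp
  have hcake := lintegral_rpow_eq_lintegral_meas_lt_mul (μ.restrict {x | φ x < s})
    (ae_of_all _ hφ0) hφm.aemeasurable two_pos
  simp only [Real.rpow_two] at hcake
  calc _ ≤ ENNReal.ofReal 2 * ∫⁻ t in Set.Ioi 0, (Set.Iio s).indicator (fun _ ↦ (K : ℝ≥0∞)) t :=
        hcake.trans_le (mul_le_mul_right (setLIntegral_mono' measurableSet_Ioi hlayer) _)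
    _ = _ := by
        rw [setLIntegral_indicator measurableSet_Iio, Set.inter_comm, Set.Ioi_inter_Iio]
        simp [mul_assoc]

variable [NormedAddCommGroup F] [InnerProductSpace ℂ F] [CompleteSpace F]

theorem setLIntegral_lt_fourier_add_div_le (hφm : Measurable φ) (hφ0 : ∀ x, 0 < φ x)
    (hφ : ∀ s : ℝ, 0 < s → volume {x | s < φ x} ≤ K * ENNReal.ofReal s⁻¹) {a b : V → F}
    (ha : Integrable a) (hb : Integrable b) (hb2 : MemLp b 2) {t : ℝ} (ht : 0 < t) :
    ∫⁻ ξ in {ξ | t < ‖𝓕 (a + b) ξ‖ / φ ξ}, ENNReal.ofReal (φ ξ ^ 2) ≤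
      4 * K * ENNReal.ofReal t⁻¹ * (∫⁻ x, ‖a x‖ₑ) +
        4 * ENNReal.ofReal (t ^ 2)⁻¹ * ∫⁻ x, ‖b x‖ₑ ^ (2 : ℝ) := by
  have hsub : {ξ | t < ‖𝓕 (a + b) ξ‖ / φ ξ} ⊆
      {ξ | φ ξ < 2 * t⁻¹ * ∫ x, ‖a x‖} ∪ {ξ | t / 2 * φ ξ ≤ ‖𝓕 b ξ‖} := by
    intro ξ hξ
    have hξ' : t * φ ξ < ‖𝓕 (a + b) ξ‖ := (lt_div_iff₀ (hφ0 ξ)).1 hξ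
    rw [fourier_add_of_integrable ha hb, Pi.add_apply] at hξ'
    have hadd := norm_add_le (𝓕 a ξ) (𝓕 b ξ)
    have hle : ‖𝓕 a ξ‖ ≤ ∫ x, ‖a x‖ := VectorFourier.norm_fourierIntegral_le_integral_norm ..
    refine or_iff_not_imp_right.2 fun h ↦ ?_
    have h' : ‖𝓕 b ξ‖ < t / 2 * φ ξ := not_le.1 h
    change φ ξ < 2 * t⁻¹ * _
    rw [mul_right_comm, ← div_eq_mul_inv, lt_div_iff₀ ht]
    linarith
  have hmeas : MeasurableSet {ξ | t / 2 * φ ξ ≤ ‖𝓕 b ξ‖} :=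
    measurableSet_le (hφm.const_mul _) (continuous_fourier hb).norm.measurable
  refine (lintegral_mono_set hsub).trans ((lintegral_union_le _ _ _).trans (add_le_add ?_ ?_))
  · refine (setLIntegral_sq_le_of_measure_lt_le hφm (fun x ↦ (hφ0 x).le) hφ
      _).trans_eq ?_
    rw [ENNReal.ofReal_mul (by positivity), ENNReal.ofReal_mul zero_le_two,
      ofReal_integral_norm_eq_lintegral_enorm ha, ENNReal.ofReal_ofNat]
    ring
  · rw [← lintegral_enorm_fourier_sq hb hb2, ← lintegral_const_mul' _ _ (by finiteness)]
    refine (setLIntegral_mono' hmeas fun ξ hξ ↦ ?_).trans (setLIntegral_le_lintegral _ _)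
    rw [← ofReal_norm, ENNReal.ofReal_rpow_of_nonneg (norm_nonneg _) zero_le_two, Real.rpow_two,
      ← ENNReal.ofReal_ofNat, ← ENNReal.ofReal_mul (by positivity),
      ← ENNReal.ofReal_mul (by positivity)]
    refine ENNReal.ofReal_le_ofReal ?_
    have hξ' : t / 2 * φ ξ ≤ ‖𝓕 b ξ‖ := hξ
    calc φ ξ ^ 2 = 4 * (t ^ 2)⁻¹ * (t / 2 * φ ξ) ^ 2 := by field_simp; norm_num
      _ ≤ _ := by gcongr; exact mul_nonneg (by positivity) (hφ0 ξ).le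

theorem setLIntegral_lt_fourier_div_le (hφm : Measurable φ) (hφ0 : ∀ x, 0 < φ x)
    (hφ : ∀ s : ℝ, 0 < s → volume {x | s < φ x} ≤ K * ENNReal.ofReal s⁻¹) {u : V → F}
    (hu : StronglyMeasurable u) (h1 : Integrable u) (h2 : MemLp u 2) {t : ℝ} (ht : 0 < t) :
    ∫⁻ ξ in {ξ | t < ‖𝓕 u ξ‖ / φ ξ}, ENNReal.ofReal (φ ξ ^ 2) ≤
      4 * K * ENNReal.ofReal t⁻¹ * (∫⁻ x in {x | t < ‖u x‖}, ‖u x‖ₑ) +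
        4 * ENNReal.ofReal (t ^ 2)⁻¹ * ∫⁻ x in {x | ‖u x‖ ≤ t}, ‖u x‖ₑ ^ (2 : ℝ) := by
  have hlt : MeasurableSet {x | t < ‖u x‖} := measurableSet_lt measurable_const hu.norm.measurable
  have hle : MeasurableSet {x | ‖u x‖ ≤ t} := measurableSet_le hu.norm.measurable measurable_const
  have hsplit : {x | t < ‖u x‖}.indicator u + {x | ‖u x‖ ≤ t}.indicator u = u := by
    ext x; by_cases h : t < ‖u x‖ <;> simp [Set.indicator, h, not_le.2, not_lt.1]
  have h := setLIntegral_lt_fourier_add_div_le hφm hφ0 hφ (h1.indicator hlt) (h1.indicator hle)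
    (h2.indicator hle) ht
  rw [hsplit] at h
  have hind (x : V) : ‖{x | ‖u x‖ ≤ t}.indicator u x‖ₑ ^ (2 : ℝ) =
      {x | ‖u x‖ ≤ t}.indicator (fun x ↦ ‖u x‖ₑ ^ (2 : ℝ)) x := by
    by_cases hx : ‖u x‖ ≤ t <;> simp [Set.indicator, hx]
  simp_rw [hind, enorm_indicator_eq_indicator_enorm] at h
  rwa [lintegral_indicator hlt, lintegral_indicator hle] at h

-- Hörmander's form of Paley's inequality: for `φ` in weak `L¹`, Plancherel and the trivial
-- `L¹ → L^∞` bound are the strong and weak endpoints of `u ↦ 𝓕 u / φ` into `L^q(φ² dξ)`.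
theorem exists_lintegral_fourier_rpow_mul_rpow_le (hφm : Measurable φ) (hφ0 : ∀ x, 0 < φ x)
    (hφ : ∀ s : ℝ, 0 < s → volume {x | s < φ x} ≤ K * ENNReal.ofReal s⁻¹) {q : ℝ} (hq1 : 1 < q)
    (hq2 : q ≤ 2) :
    ∃ C : ℝ≥0, ∀ u : V → F, StronglyMeasurable u → Integrable u → MemLp u 2 →
      ∫⁻ ξ, ‖𝓕 u ξ‖ₑ ^ q * ENNReal.ofReal (φ ξ ^ (2 - q)) ≤ C * ∫⁻ x, ‖u x‖ₑ ^ q := by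
  rcases hq2.eq_or_lt with rfl | hq2
  · exact ⟨1, fun u _ h1 h2 ↦ by simpa using (lintegral_enorm_fourier_sq h1 h2).le⟩
  refine ⟨q.toNNReal * (4 * K * (q - 1)⁻¹.toNNReal + 4 * (2 - q)⁻¹.toNNReal), fun u hu h1 h2 ↦ ?_⟩
  have hq0 : 0 ≤ q := by linarith
  have hF : Measurable fun ξ ↦ ‖𝓕 u ξ‖ / φ ξ := (continuous_fourier h1).norm.measurable.div hφm
  let ν : Measure V := volume.withDensity fun ξ ↦ ENNReal.ofReal (φ ξ ^ 2)
  have hlevel (t : ℝ) (ht : 0 < t) : ν {ξ | t < ‖𝓕 u ξ‖ / φ ξ} ≤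
      (4 * K : ℝ≥0) * ENNReal.ofReal t⁻¹ * (∫⁻ x in {x | t < ‖u x‖}, ENNReal.ofReal ‖u x‖) +
        (4 : ℝ≥0) * ENNReal.ofReal (t ^ 2)⁻¹ *
          ∫⁻ x in {x | ‖u x‖ ≤ t}, ENNReal.ofReal (‖u x‖ ^ 2) := by
    rw [withDensity_apply _ (measurableSet_lt measurable_const hF)]
    simpa only [← Real.rpow_two, ofReal_norm_rpow _ zero_le_two, ofReal_norm, ENNReal.coe_mul,
      ENNReal.coe_ofNat] using
      setLIntegral_lt_fourier_div_le hφm hφ0 hφ hu h1 h2 ht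
  have hint : ∫⁻ ξ, ‖𝓕 u ξ‖ₑ ^ q * ENNReal.ofReal (φ ξ ^ (2 - q)) =
      ∫⁻ ξ, ENNReal.ofReal ((‖𝓕 u ξ‖ / φ ξ) ^ q) ∂ν := by
    rw [lintegral_withDensity_eq_lintegral_mul _ (by fun_prop) (by fun_prop)]
    refine lintegral_congr fun ξ ↦ ?_
    rw [Pi.mul_apply, ← ofReal_norm_rpow _ hq0, ← ENNReal.ofReal_mul (by positivity),
      ← ENNReal.ofReal_mul (by positivity), Real.div_rpow (norm_nonneg _) (hφ0 ξ).le,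
      Real.rpow_sub (hφ0 ξ), Real.rpow_two]
    congr 1; ring
  rw [hint]
  refine (lintegral_rpow_le_of_measure_lt_le hF (fun ξ ↦ div_nonneg (norm_nonneg _) (hφ0 ξ).le)
    hu.norm.measurable (fun _ ↦ norm_nonneg _) hq1 hq2 hlevel).trans_eq ?_
  simp_rw [ofReal_norm_rpow _ hq0]
  simp [ENNReal.ofReal]

end PaleyInequality

section LpDuality

/-- The number `|z|^{p-2} z̄`; composing it with a function of `Lᵖ` gives the function of the dual
exponent that attains equality in Hölder's inequality. -/
def lpDual (p : ℝ) (z : ℂ) : ℂ := ‖z‖ ^ (p - 2) • (starRingEnd ℂ) z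

variable {p q : ℝ}

theorem mul_lpDual (hp : p ≠ 0) (z : ℂ) : z * lpDual p z = (‖z‖ ^ p : ℝ) := by
  rw [lpDual, mul_smul_comm, Complex.mul_conj', Complex.real_smul, ← Complex.ofReal_pow,
    ← Complex.ofReal_mul, ← Real.rpow_two, ← Real.rpow_add' (norm_nonneg _) (by simpa),
    sub_add_cancel]

theorem norm_lpDual_eq_mul (p : ℝ) (z : ℂ) : ‖lpDual p z‖ = ‖z‖ ^ (p - 2) * ‖z‖ := by
  rw [lpDual, norm_smul, RCLike.norm_conj, Real.norm_of_nonneg (by positivity)]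

theorem enorm_lpDual (hp : 1 < p) (z : ℂ) : ‖lpDual p z‖ₑ = ‖z‖ₑ ^ (p - 1) := by
  rw [← ofReal_norm, norm_lpDual_eq_mul,
    ← Real.rpow_add_one' (norm_nonneg _) (by linarith), ofReal_norm_rpow _ (by linarith)]
  congr 1; ring

theorem continuous_lpDual (hp : 2 ≤ p) : Continuous (lpDual p) :=
  (continuous_norm.rpow_const fun _ ↦ Or.inr (by linarith)).smul Complex.continuous_conj

theorem memLp_lpDual_comp {V : Type*} [NormedAddCommGroup V] [InnerProductSpace ℝ V]
    [FiniteDimensional ℝ V] [MeasurableSpace V] [BorelSpace V] (hp : 2 ≤ p) (G : 𝓢(V, ℂ))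
    (r : ℝ≥0∞) : MemLp (fun ξ ↦ lpDual p (G ξ)) r := by
  refine (G.memLp r volume).of_le_mul (c := ‖G.toBoundedContinuousFunction‖ ^ (p - 2))
    ((continuous_lpDual hp).comp G.continuous).aestronglyMeasurable (ae_of_all _ fun ξ ↦ ?_)
  rw [norm_lpDual_eq_mul]
  gcongr
  · exact G.toBoundedContinuousFunction.norm_coe_le_norm ξ

theorem le_mul_of_le_rpow_mul_rpow (hpq : p.HolderConjugate q) {A B C : ℝ≥0∞} (hA : A ≠ ⊤)
    (h : A ≤ B ^ (1 / p) * (C * A) ^ (1 / q)) : A ≤ C ^ (p - 1) * B := by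
  rcases eq_or_ne A 0 with rfl | hA0
  · exact zero_le
  have hp1 : 0 ≤ p - 1 := by linarith [hpq.lt]
  have hexp : 1 / q * p = p - 1 := by
    rw [one_div_mul_eq_div, hpq.div_conj_eq_sub_one]
  have hAp : A * A ^ (p - 1) ≤ (C ^ (p - 1) * B) * A ^ (p - 1) :=
    calc A * A ^ (p - 1) = A ^ p := by
          rw [← add_sub_cancel 1 p, ENNReal.rpow_add _ _ hA0 hA, ENNReal.rpow_one,
            add_sub_cancel]
      _ ≤ (B ^ (1 / p) * (C * A) ^ (1 / q)) ^ p := ENNReal.rpow_le_rpow h hpq.nonneg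
      _ = _ := by
        rw [ENNReal.mul_rpow_of_nonneg _ _ hpq.nonneg, ← ENNReal.rpow_mul, ← ENNReal.rpow_mul, hexp,
          one_div_mul_cancel hpq.ne_zero, ENNReal.rpow_one, ENNReal.mul_rpow_of_nonneg _ _ hp1]
        ring
  exact (ENNReal.mul_le_mul_iff_left (by simp [hA0, hA]) (by finiteness)).1 hAp

theorem enorm_integral_mul_le_weighted {α : Type*} [MeasurableSpace α] {μ : Measure α}
    (hpq : p.HolderConjugate q) {g h : α → ℂ} (hg : AEStronglyMeasurable g μ)
    (hh : AEStronglyMeasurable h μ) {φ : α → ℝ} (hφm : Measurable φ) (hφ0 : ∀ x, 0 < φ x) :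
    ‖∫ x, g x * h x ∂μ‖ₑ ≤
      (∫⁻ x, ‖g x‖ₑ ^ p * ENNReal.ofReal (φ x ^ (2 - p)) ∂μ) ^ (1 / p) *
        (∫⁻ x, ‖h x‖ₑ ^ q * ENNReal.ofReal (φ x ^ (2 - q)) ∂μ) ^ (1 / q) := by
  let s : ℝ := 1 - 2 / p
  have hp0 : p ≠ 0 := hpq.ne_zero
  have hsp : -s * p = 2 - p := by simp only [s]; field_simp; ring
  have hsq : s * q = 2 - q := by simp only [s]; field_simp; linarith [hpq.mul_eq_add]
  have hpow (r s' : ℝ) (hr : 0 ≤ r) (z : ℂ) (x : α) :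
      (‖z‖ₑ * ENNReal.ofReal (φ x ^ s')) ^ r = ‖z‖ₑ ^ r * ENNReal.ofReal (φ x ^ (s' * r)) := by
    have := hφ0 x
    rw [ENNReal.mul_rpow_of_nonneg _ _ hr, ENNReal.ofReal_rpow_of_nonneg (by positivity) hr,
      Real.rpow_mul this.le]
  have hφs (s' : ℝ) : AEMeasurable (fun x ↦ ENNReal.ofReal (φ x ^ s')) μ :=
    (hφm.pow_const s').ennreal_ofReal.aemeasurable
  calc _ ≤ ∫⁻ x, ‖g x * h x‖ₑ ∂μ := enorm_integral_le_lintegral_enorm _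
    _ = ∫⁻ x, (‖g x‖ₑ * ENNReal.ofReal (φ x ^ (-s))) * (‖h x‖ₑ * ENNReal.ofReal (φ x ^ s)) ∂μ := by
        refine lintegral_congr fun x ↦ ?_
        rw [enorm_mul, mul_mul_mul_comm, ← ENNReal.ofReal_mul (Real.rpow_nonneg (hφ0 x).le _),
          ← Real.rpow_add (hφ0 x), neg_add_cancel, Real.rpow_zero, ENNReal.ofReal_one, mul_one]
    _ ≤ (∫⁻ x, (‖g x‖ₑ * ENNReal.ofReal (φ x ^ (-s))) ^ p ∂μ) ^ (1 / p) *
          (∫⁻ x, (‖h x‖ₑ * ENNReal.ofReal (φ x ^ s)) ^ q ∂μ) ^ (1 / q) :=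
        ENNReal.lintegral_mul_le_Lp_mul_Lq μ hpq (hg.enorm.mul (hφs _)) (hh.enorm.mul (hφs _))
    _ = _ := by simp only [hpow _ _ hpq.nonneg, hpow _ _ hpq.symm.nonneg, hsp, hsq]

end LpDuality

section WeightedFourier

variable {V : Type*} [NormedAddCommGroup V] [InnerProductSpace ℝ V] [FiniteDimensional ℝ V]
  [MeasurableSpace V] [BorelSpace V]

theorem lintegral_schwartz_rpow_ne_top {F : Type*} [NormedAddCommGroup F] [NormedSpace ℝ F] {p : ℝ}
    (hp : 0 < p) (f : 𝓢(V, F)) :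
    ∫⁻ x, ‖f x‖ₑ ^ p ≠ ⊤ := by
  have h := (f.memLp (ENNReal.ofReal p) volume).eLpNorm_lt_top
  have := lintegral_rpow_enorm_lt_top_of_eLpNorm_lt_top (by simpa) ENNReal.ofReal_ne_top h
  rwa [ENNReal.toReal_ofReal hp.le, lt_top_iff_ne_top] at this

theorem lintegral_fourier_rpow_eq_enorm_integral {p : ℝ} (hp : 2 ≤ p) (g : 𝓢(V, ℂ)) :
    ∫⁻ ξ, ‖𝓕 g ξ‖ₑ ^ p = ‖∫ x, g x * 𝓕 (fun ξ ↦ lpDual p (𝓕 g ξ)) x‖ₑ := by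
  have hu : Integrable fun ξ ↦ lpDual p (𝓕 g ξ) :=
    memLp_one_iff_integrable.1 (memLp_lpDual_comp hp _ 1)
  have hpair : ∫ x, g x * 𝓕 (fun ξ ↦ lpDual p (𝓕 g ξ)) x = (∫ ξ, ‖𝓕 g ξ‖ ^ p : ℝ) := by
    refine (integral_smul_fourier_eq g.integrable hu).trans ?_
    simp_rw [← SchwartzMap.fourier_coe, smul_eq_mul, mul_lpDual (show p ≠ 0 by linarith)]
    exact integral_complex_ofReal
  have hint : Integrable fun ξ ↦ ‖𝓕 g ξ‖ ^ p := by
    have h := ((𝓕 g).memLp (ENNReal.ofReal p) volume).integrable_norm_rpow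
      (by simp; linarith) (by simp)
    rwa [ENNReal.toReal_ofReal (by linarith)] at h
  rw [hpair, ← ofReal_norm, Complex.norm_real, Real.norm_of_nonneg (by positivity),
    ofReal_integral_eq_lintegral_ofReal hint (ae_of_all _ fun _ ↦ by positivity)]
  simp_rw [ofReal_norm_rpow _ (show 0 ≤ p by linarith)]

theorem exists_lintegral_fourier_rpow_le {φ : V → ℝ} {K : ℝ≥0} (hφm : Measurable φ)
    (hφ0 : ∀ x, 0 < φ x)
    (hφ : ∀ s : ℝ, 0 < s → volume {x | s < φ x} ≤ K * ENNReal.ofReal s⁻¹) {p : ℝ} (hp : 2 ≤ p) :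
    ∃ C : ℝ≥0, ∀ g : 𝓢(V, ℂ),
      ∫⁻ ξ, ‖𝓕 g ξ‖ₑ ^ p ≤ C * ∫⁻ x, ‖g x‖ₑ ^ p * ENNReal.ofReal (φ x ^ (2 - p)) := by
  let q := p.conjExponent
  have hpq : p.HolderConjugate q := .conjExponent (by linarith)
  have hq2 : q ≤ 2 := by
    rw [hpq.conjugate_eq, div_le_iff₀ (by linarith)]; linarith
  obtain ⟨C, hC⟩ := exists_lintegral_fourier_rpow_mul_rpow_le (F := ℂ) hφm hφ0 hφ hpq.symm.lt hq2
  refine ⟨C ^ (p - 1), fun g ↦ ?_⟩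
  let u : V → ℂ := fun ξ ↦ lpDual p (𝓕 g ξ)
  have hu : Integrable u := memLp_one_iff_integrable.1 (memLp_lpDual_comp hp _ 1)
  have hmeas : StronglyMeasurable u :=
    ((continuous_lpDual hp).comp (𝓕 g).continuous).stronglyMeasurable
  rw [ENNReal.coe_rpow_of_nonneg _ (by linarith)]
  refine le_mul_of_le_rpow_mul_rpow hpq (lintegral_schwartz_rpow_ne_top hpq.pos _) ?_
  calc ∫⁻ ξ, ‖𝓕 g ξ‖ₑ ^ p = ‖∫ x, g x * 𝓕 u x‖ₑ := lintegral_fourier_rpow_eq_enorm_integral hp g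
    _ ≤ (∫⁻ x, ‖g x‖ₑ ^ p * ENNReal.ofReal (φ x ^ (2 - p))) ^ (1 / p) *
          (∫⁻ x, ‖𝓕 u x‖ₑ ^ q * ENNReal.ofReal (φ x ^ (2 - q))) ^ (1 / q) :=
        enorm_integral_mul_le_weighted hpq g.continuous.aestronglyMeasurable
          (continuous_fourier hu).aestronglyMeasurable hφm hφ0
    _ ≤ _ := by
        refine mul_le_mul_right (ENNReal.rpow_le_rpow
          ((hC u hmeas hu (memLp_lpDual_comp hp _ 2)).trans_eq ?_) hpq.symm.one_div_nonneg) _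
        congr 1
        refine lintegral_congr fun ξ ↦ ?_
        rw [enorm_lpDual (by linarith), ← ENNReal.rpow_mul, hpq.sub_one_mul_conj]

end WeightedFourier

section JapaneseBracket

variable {V : Type*} [NormedAddCommGroup V]

/-- The power `⟨x⟩ᵏ = (1 + |x|²)^{k/2}` of the Japanese bracket, which is the symbol of the Bessel
potential of order `k`. -/
def japaneseBracket (k : ℝ) (x : V) : ℝ := (1 + ‖x‖ ^ 2) ^ (k / 2)

variable {k : ℝ}

theorem japaneseBracket_pos (k : ℝ) (x : V) : 0 < japaneseBracket k x :=
  Real.rpow_pos_of_pos (by positivity) _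

theorem japaneseBracket_zero (x : V) : japaneseBracket 0 x = 1 := by
  rw [japaneseBracket, zero_div, Real.rpow_zero]

theorem japaneseBracket_add (k l : ℝ) (x : V) :
    japaneseBracket (k + l) x = japaneseBracket k x * japaneseBracket l x := by
  rw [japaneseBracket, add_div, Real.rpow_add (by positivity), japaneseBracket, japaneseBracket]

theorem japaneseBracket_rpow (k r : ℝ) (x : V) :
    japaneseBracket k x ^ r = japaneseBracket (k * r) x := by
  rw [japaneseBracket, japaneseBracket, ← Real.rpow_mul (by positivity), div_mul_eq_mul_div]

theorem japaneseBracket_le_one (hk : k ≤ 0) (x : V) : japaneseBracket k x ≤ 1 :=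
  Real.rpow_le_one_of_one_le_of_nonpos (le_add_of_nonneg_right (by positivity)) (by linarith)

theorem japaneseBracket_le_of_norm_le (hk : 0 ≤ k) {x y : V} (hxy : ‖x‖ ≤ ‖y‖) :
    japaneseBracket k x ≤ japaneseBracket k y := by
  unfold japaneseBracket
  gcongr

theorem continuous_japaneseBracket (k : ℝ) : Continuous (japaneseBracket k : V → ℝ) :=
  (by fun_prop : Continuous fun x : V ↦ 1 + ‖x‖ ^ 2).rpow_const fun _ ↦ Or.inl (by positivity)

theorem tendsto_japaneseBracket_cobounded (hk : k < 0) :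
    Tendsto (japaneseBracket k : V → ℝ) (Bornology.cobounded V) (𝓝 0) := by
  have h : Tendsto (fun x : V ↦ 1 + ‖x‖ ^ 2) (Bornology.cobounded V) atTop :=
    tendsto_atTop_add_const_left _ _
      ((tendsto_pow_atTop two_ne_zero).comp tendsto_norm_cobounded_atTop)
  simpa only [neg_neg] using! (tendsto_rpow_neg_atTop (y := -(k / 2)) (by linarith)).comp h

theorem norm_lt_of_lt_japaneseBracket {r s : ℝ} (hr : 0 < r) (hs : 0 < s) {x : V}
    (hx : s < japaneseBracket (-r) x) : ‖x‖ < s⁻¹ ^ r⁻¹ := by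
  have hr2 : ‖x‖ ^ r ≤ japaneseBracket r x := by
    calc ‖x‖ ^ r = (‖x‖ ^ 2) ^ (r / 2) := by
          rw [← Real.rpow_two, ← Real.rpow_mul (norm_nonneg x), mul_div_cancel₀ r two_ne_zero]
      _ ≤ japaneseBracket r x := by unfold japaneseBracket; gcongr; linarith
  have hinv : japaneseBracket r x < s⁻¹ := by
    have h1 : japaneseBracket r x * japaneseBracket (-r) x = 1 := by
      rw [← japaneseBracket_add, add_neg_cancel, japaneseBracket_zero]
    rw [eq_inv_of_mul_eq_one_left h1]
    gcongr
  rw [Real.lt_rpow_inv_iff_of_pos (norm_nonneg x) (by positivity) hr]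
  exact hr2.trans_lt hinv

variable [NormedSpace ℝ V] [FiniteDimensional ℝ V] [MeasurableSpace V] [BorelSpace V]

theorem measure_lt_japaneseBracket_le [Nontrivial V] (μ : Measure V) [μ.IsAddHaarMeasure]
    {s : ℝ} (hs : 0 < s) :
    μ {x : V | s < japaneseBracket (-Module.finrank ℝ V) x} ≤
      μ (Metric.ball (0 : V) 1) * ENNReal.ofReal s⁻¹ := by
  have hn : (0 : ℝ) < Module.finrank ℝ V := by exact_mod_cast Module.finrank_pos
  calc μ {x : V | s < japaneseBracket (-Module.finrank ℝ V) x}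
      ≤ μ (Metric.ball (0 : V) (s⁻¹ ^ (Module.finrank ℝ V : ℝ)⁻¹)) :=
        measure_mono fun x hx ↦
          mem_ball_zero_iff.2 (norm_lt_of_lt_japaneseBracket hn hs hx)
    _ = _ := by
        rw [Measure.addHaar_ball _ _ (by positivity),
          Real.rpow_inv_natCast_pow (by positivity) Module.finrank_pos.ne', mul_comm]

end JapaneseBracket

section BesselPotential

variable {V F : Type*} [NormedAddCommGroup V] [InnerProductSpace ℝ V]
  [NormedAddCommGroup F] [NormedSpace ℂ F]

theorem hasTemperateGrowth_japaneseBracket (k : ℝ) :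
    (japaneseBracket k : V → ℝ).HasTemperateGrowth :=
  Function.hasTemperateGrowth_one_add_norm_sq_rpow V (k / 2)

theorem hasTemperateGrowth_japaneseBracket_smul (k c : ℝ) :
    (fun x : V ↦ japaneseBracket k (c • x)).HasTemperateGrowth :=
  (hasTemperateGrowth_japaneseBracket k).comp
    (c • ContinuousLinearMap.id ℝ V).hasTemperateGrowth

/-- Multiplication by `⟨x⟩ᵏ` on Schwartz functions. On the Fourier side it is the Bessel potential
of order `k`, up to the normalization of the Fourier transform. -/
def bracketMul (k : ℝ) (f : 𝓢(V, F)) : 𝓢(V, F) :=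
  SchwartzMap.smulLeftCLM F (japaneseBracket k : V → ℝ) f

theorem bracketMul_apply (k : ℝ) (f : 𝓢(V, F)) (x : V) :
    bracketMul k f x = japaneseBracket k x • f x :=
  SchwartzMap.smulLeftCLM_apply_apply (hasTemperateGrowth_japaneseBracket k) f x

theorem enorm_bracketMul_rpow {p : ℝ} (hp : 0 ≤ p) (k : ℝ) (f : 𝓢(V, F)) (x : V) :
    ‖bracketMul k f x‖ₑ ^ p = ENNReal.ofReal (japaneseBracket (k * p) x) * ‖f x‖ₑ ^ p := by
  rw [bracketMul_apply, enorm_smul, ENNReal.mul_rpow_of_nonneg _ _ hp, ← japaneseBracket_rpow,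
    Real.enorm_of_nonneg (japaneseBracket_pos k x).le,
    ENNReal.ofReal_rpow_of_nonneg (japaneseBracket_pos k x).le hp]

theorem enorm_bracketMul_rpow_mul_le {p k l r : ℝ} (hp : 0 ≤ p) (hkl : k * p + l * r ≤ 0)
    (f : 𝓢(V, F)) (x : V) :
    ‖bracketMul k f x‖ₑ ^ p * ENNReal.ofReal (japaneseBracket l x ^ r) ≤ ‖f x‖ₑ ^ p := by
  rw [enorm_bracketMul_rpow hp, japaneseBracket_rpow, mul_right_comm,
    ← ENNReal.ofReal_mul (japaneseBracket_pos _ x).le, ← japaneseBracket_add]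
  exact mul_le_of_le_one_left' (ENNReal.ofReal_le_one.2 (japaneseBracket_le_one hkl x))

variable [FiniteDimensional ℝ V] [MeasurableSpace V] [BorelSpace V]

/-- The Bessel potential `(1 - Δ)^{k/2}` on Schwartz functions, as the Fourier multiplier with
symbol `⟨2πη⟩ᵏ`; the factor `2π` is due to the character `exp(-2πi⟪x, η⟫)` in `𝓕`. -/
def besselPotential (k : ℝ) (f : 𝓢(V, F)) : 𝓢(V, F) :=
  SchwartzMap.fourierMultiplierCLM F (fun η : V ↦ japaneseBracket k ((2 * π) • η)) f

theorem besselPotential_zero [CompleteSpace F] (f : 𝓢(V, F)) : besselPotential 0 f = f := by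
  simp [besselPotential, japaneseBracket_zero]

theorem fourier_besselPotential [CompleteSpace F] (k : ℝ) (f : 𝓢(V, F)) (η : V) :
    𝓕 (besselPotential k f) η = japaneseBracket k ((2 * π) • η) • 𝓕 f η := by
  rw [besselPotential, SchwartzMap.fourierMultiplierCLM_apply,
    FourierTransform.fourier_fourierInv_eq, SchwartzMap.smulLeftCLM_apply_apply
      (hasTemperateGrowth_japaneseBracket_smul k _)]

end BesselPotential

section GaussianMixture

theorem integral_exp_neg_mul_gammaMeasure {a s : ℝ} (ha : 0 < a) (hs : 0 ≤ s) :
    ∫ t, Real.exp (-(s * max t 0)) ∂(ProbabilityTheory.gammaMeasure a 1) = (1 + s) ^ (-a) := by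
  have hm : Measurable (ProbabilityTheory.gammaPDF a 1) :=
    (ProbabilityTheory.measurable_gammaPDFReal a 1).ennreal_ofReal
  have hdensity (t : ℝ) : (ProbabilityTheory.gammaPDF a 1 t).toReal • Real.exp (-(s * max t 0)) =
      (Set.Ici 0).indicator
        (fun t : ℝ ↦ (Real.Gamma a)⁻¹ * (t ^ (a - 1) * Real.exp (-((1 + s) * t)))) t := by
    rw [ProbabilityTheory.gammaPDF,
      ENNReal.toReal_ofReal (ProbabilityTheory.gammaPDFReal_nonneg ha one_pos t),
      ProbabilityTheory.gammaPDFReal]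
    by_cases ht : 0 ≤ t
    · rw [if_pos ht, Set.indicator_of_mem (Set.mem_Ici.2 ht), max_eq_left ht, add_mul, neg_add,
        Real.exp_add, Real.one_rpow, smul_eq_mul]
      ring
    · rw [if_neg ht, Set.indicator_of_notMem (by simpa using ht), zero_smul]
  rw [ProbabilityTheory.gammaMeasure, integral_withDensity_eq_integral_toReal_smul hm
    (ae_of_all _ fun _ ↦ ENNReal.ofReal_lt_top)]
  simp_rw [hdensity]
  rw [integral_indicator measurableSet_Ici, integral_Ici_eq_integral_Ioi, integral_const_mul,
    Real.integral_rpow_mul_exp_neg_mul_Ioi ha (by positivity), one_div,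
    Real.inv_rpow (by positivity), Real.rpow_neg (by positivity)]
  have hΓ : Real.Gamma a ≠ 0 := (Real.Gamma_pos_of_pos ha).ne'
  field_simp

variable {V : Type*} [NormedAddCommGroup V] [InnerProductSpace ℝ V] [FiniteDimensional ℝ V]
  [MeasurableSpace V] [BorelSpace V]

theorem charFun_stdGaussian_sqrt_smul {t : ℝ} (ht : 0 ≤ t) (ξ : V) :
    charFun (ProbabilityTheory.stdGaussian V) (√(2 * t) • ξ) =
      (Real.exp (-(‖ξ‖ ^ 2 * t)) : ℂ) := by
  have hsq : (√(2 * t) * ‖ξ‖) ^ 2 = 2 * (‖ξ‖ ^ 2 * t) := by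
    rw [mul_pow, Real.sq_sqrt (by positivity)]; ring
  rw [ProbabilityTheory.charFun_stdGaussian, norm_smul, Real.norm_of_nonneg (by positivity),
    ← Complex.ofReal_pow, hsq]
  push_cast
  congr 1
  ring

-- The measure is a mixture of centred Gaussians whose variance has a Gamma distribution.
theorem exists_charFun_eq_japaneseBracket {k : ℝ} (hk : k < 0) :
    ∃ μ : Measure V, IsProbabilityMeasure μ ∧ ∀ ξ, charFun μ ξ = (japaneseBracket k ξ : ℂ) := by
  have ha : 0 < -(k / 2) := by linarith
  have := ProbabilityTheory.isProbabilityMeasure_gammaMeasure ha one_pos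
  set γ := ProbabilityTheory.gammaMeasure (-(k / 2)) 1
  have hm : Measurable fun z : ℝ × V ↦ √(2 * max z.1 0) • z.2 := by fun_prop
  refine ⟨(γ.prod (ProbabilityTheory.stdGaussian V)).map fun z ↦ √(2 * max z.1 0) • z.2,
    Measure.isProbabilityMeasure_map hm.aemeasurable, fun ξ ↦ ?_⟩
  have hint : Integrable (fun z : ℝ × V ↦ cexp (⟪√(2 * max z.1 0) • z.2, ξ⟫ * I))
      (γ.prod (ProbabilityTheory.stdGaussian V)) :=
    Integrable.of_bound (by fun_prop) 1 (ae_of_all _ fun z ↦ by rw [Complex.norm_exp_ofReal_mul_I])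
  have hinner (t : ℝ) :
      ∫ y, cexp (⟪√(2 * max t 0) • y, ξ⟫ * I) ∂(ProbabilityTheory.stdGaussian V) =
        (Real.exp (-(‖ξ‖ ^ 2 * max t 0)) : ℂ) := by
    rw [← charFun_stdGaussian_sqrt_smul (le_max_right t 0), charFun_apply]
    simp_rw [real_inner_smul_left, real_inner_smul_right]
  rw [charFun_apply, integral_map hm.aemeasurable (by fun_prop), integral_prod _ hint]
  simp_rw [hinner]
  rw [integral_complex_ofReal, integral_exp_neg_mul_gammaMeasure ha (by positivity), neg_neg,
    japaneseBracket]

end GaussianMixture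

section BesselContraction

variable {V F : Type*} [NormedAddCommGroup V] [InnerProductSpace ℝ V] [FiniteDimensional ℝ V]
  [MeasurableSpace V] [BorelSpace V] [NormedAddCommGroup F] [NormedSpace ℂ F]

theorem lintegral_rpow_enorm_le_of_eq_integral_add {p : ℝ} (hp : 1 ≤ p) (μ : Measure V)
    [IsProbabilityMeasure μ] {f h : V → F} (hh : Continuous h)
    (hf : ∀ x, f x = ∫ y, h (x + y) ∂μ) : ∫⁻ x, ‖f x‖ₑ ^ p ≤ ∫⁻ x, ‖h x‖ₑ ^ p := by
  have hjensen (x : V) : ‖f x‖ₑ ^ p ≤ ∫⁻ y, ‖h (x + y)‖ₑ ^ p ∂μ := by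
    have hmono := eLpNorm'_le_eLpNorm'_of_exponent_le (μ := μ) one_pos hp
      (hh.comp (continuous_const_add x)).aestronglyMeasurable
    simp only [eLpNorm', ENNReal.rpow_one, one_div, inv_one, Function.comp_apply] at hmono
    rw [← ENNReal.le_rpow_inv_iff (by positivity), hf]
    exact (enorm_integral_le_lintegral_enorm _).trans hmono
  have hmeas : Measurable fun z : V × V ↦ ‖h (z.1 + z.2)‖ₑ ^ p := by
    exact (hh.comp continuous_add).enorm.measurable.pow_const p
  calc ∫⁻ x, ‖f x‖ₑ ^ p ≤ ∫⁻ x, ∫⁻ y, ‖h (x + y)‖ₑ ^ p ∂μ := lintegral_mono hjensen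
    _ = ∫⁻ y, (∫⁻ x, ‖h (x + y)‖ₑ ^ p) ∂μ := lintegral_lintegral_swap hmeas.aemeasurable
    _ = ∫⁻ x, ‖h x‖ₑ ^ p := by
        simp [lintegral_add_right_eq_self fun x ↦ ‖h x‖ₑ ^ p]

variable [CompleteSpace F]

theorem eq_integral_exp_smul_fourier (f : 𝓢(V, F)) (x : V) :
    f x = ∫ η, cexp (↑(2 * π * ⟪η, x⟫) * I) • 𝓕 f η := by
  rw [SchwartzMap.fourier_coe, ← Real.fourierInv_eq', ← SchwartzMap.fourier_coe,
    ← SchwartzMap.fourierInv_coe, FourierTransform.fourierInv_fourier_eq]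

theorem eq_integral_add_of_fourier_eq_charFun_smul (μ : Measure V) [IsProbabilityMeasure μ]
    {f h : 𝓢(V, F)} (hfh : ∀ η, 𝓕 f η = charFun μ ((2 * π) • η) • 𝓕 h η) (x : V) :
    f x = ∫ y, h (x + y) ∂μ := by
  have hint : Integrable (fun z : V × V ↦ cexp (↑(2 * π * ⟪z.1, x + z.2⟫) * I) • 𝓕 h z.1)
      (volume.prod μ) :=
    ((𝓕 h).integrable.comp_fst μ).bdd_smul 1
      (Continuous.aestronglyMeasurable (by fun_prop))
      (ae_of_all _ fun z ↦ by rw [Complex.norm_exp_ofReal_mul_I])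
  have hexp (η : V) : cexp (↑(2 * π * ⟪η, x⟫) * I) * charFun μ ((2 * π) • η) =
      ∫ y, cexp (↑(2 * π * ⟪η, x + y⟫) * I) ∂μ := by
    rw [charFun_apply, ← integral_const_mul]
    refine integral_congr_ae (ae_of_all _ fun y ↦ ?_)
    simp only [← Complex.exp_add, inner_smul_right, inner_add_right, real_inner_comm η y]
    push_cast
    ring_nf
  calc f x = ∫ η, ∫ y, cexp (↑(2 * π * ⟪η, x + y⟫) * I) • 𝓕 h η ∂μ := by
        simp_rw [eq_integral_exp_smul_fourier f, hfh, smul_smul, hexp, integral_smul_const]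
    _ = ∫ y, (∫ η, cexp (↑(2 * π * ⟪η, x + y⟫) * I) • 𝓕 h η) ∂μ := integral_integral_swap hint
    _ = ∫ y, h (x + y) ∂μ := by simp_rw [← eq_integral_exp_smul_fourier]

theorem lintegral_rpow_enorm_le_besselPotential {k p : ℝ} (hk : 0 ≤ k) (hp : 1 ≤ p)
    (f : 𝓢(V, F)) : ∫⁻ x, ‖f x‖ₑ ^ p ≤ ∫⁻ x, ‖besselPotential k f x‖ₑ ^ p := by
  rcases hk.eq_or_lt with rfl | hk
  · rw [besselPotential_zero]
  · obtain ⟨μ, _, hμ⟩ := exists_charFun_eq_japaneseBracket (V := V) (neg_lt_zero.2 hk)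
    refine lintegral_rpow_enorm_le_of_eq_integral_add hp μ (SchwartzMap.continuous _)
      (eq_integral_add_of_fourier_eq_charFun_smul μ fun η ↦ ?_)
    rw [hμ, fourier_besselPotential, Complex.coe_smul, smul_smul, ← japaneseBracket_add,
      neg_add_cancel, japaneseBracket_zero, one_smul]

end BesselContraction

section Sufficiency

variable {V : Type*} [NormedAddCommGroup V] [InnerProductSpace ℝ V] [FiniteDimensional ℝ V]
  [MeasurableSpace V] [BorelSpace V]

variable (V) in
/-- Boundedness of the Fourier transform from the Bessel potential space `Lᵖ` of order `k₁` to the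
one of order `k₂`, tested on Schwartz functions. Since `(1 - Δ)^{k₂/2} ℱf` is the Fourier transform
of `⟨x⟩^{k₂} f`, the left-hand side needs no Bessel potential; `p`-th powers of norms are compared,
as extended nonnegative integrals. -/
def FourierBounded (p k₁ k₂ : ℝ) : Prop :=
  ∃ C : ℝ≥0, ∀ f : 𝓢(V, ℂ),
    ∫⁻ ξ, ‖𝓕 (bracketMul k₂ f) ξ‖ₑ ^ p ≤ C * ∫⁻ x, ‖besselPotential k₁ f x‖ₑ ^ p

variable {p k₁ k₂ : ℝ}

theorem fourierBounded_of_nonneg_of_le [Nontrivial V] (hp : 2 ≤ p) (hk₁ : 0 ≤ k₁)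
    (hk₂ : k₂ * p ≤ -(Module.finrank ℝ V * (p - 2))) : FourierBounded V p k₁ k₂ := by
  obtain ⟨C, hC⟩ := exists_lintegral_fourier_rpow_le (V := V)
    (φ := japaneseBracket (-Module.finrank ℝ V)) (K := (volume (Metric.ball (0 : V) 1)).toNNReal)
    (continuous_japaneseBracket _).measurable (japaneseBracket_pos _)
    (fun s hs ↦ by
      rw [ENNReal.coe_toNNReal measure_ball_lt_top.ne]
      exact measure_lt_japaneseBracket_le volume hs) hp
  refine ⟨C, fun f ↦ (hC _).trans (mul_le_mul_right ?_ _)⟩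
  calc ∫⁻ x, ‖bracketMul k₂ f x‖ₑ ^ p *
          ENNReal.ofReal (japaneseBracket (-Module.finrank ℝ V) x ^ (2 - p))
      ≤ ∫⁻ x, ‖f x‖ₑ ^ p :=
        lintegral_mono fun x ↦ enorm_bracketMul_rpow_mul_le (by linarith) (by linarith) f x
    _ ≤ _ := lintegral_rpow_enorm_le_besselPotential hk₁ (by linarith) f

end Sufficiency

section Interpolation

variable {V F : Type*} [NormedAddCommGroup V] [InnerProductSpace ℝ V] [FiniteDimensional ℝ V]
  [MeasurableSpace V] [BorelSpace V] [NormedAddCommGroup F] [InnerProductSpace ℂ F]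
  [CompleteSpace F] {p : ℝ}

theorem lintegral_enorm_fourier_rpow_le (hp : 2 ≤ p) {u : V → F} (h1 : Integrable u)
    (h2 : MemLp u 2) :
    ∫⁻ ξ, ‖𝓕 u ξ‖ₑ ^ p ≤ (∫⁻ x, ‖u x‖ₑ) ^ (p - 2) * ∫⁻ x, ‖u x‖ₑ ^ (2 : ℝ) := by
  have hp2 : 0 ≤ p - 2 := by linarith
  rw [← lintegral_enorm_fourier_sq h1 h2,
    ← lintegral_const_mul' _ _ (ENNReal.rpow_ne_top_of_nonneg hp2 h1.2.ne)]
  refine lintegral_mono fun ξ ↦ ?_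
  rw [← sub_add_cancel p 2, ENNReal.rpow_add_of_nonneg _ _ hp2 zero_le_two, sub_add_cancel]
  gcongr
  exact enorm_fourier_le_lintegral_enorm u ξ

theorem lintegral_enorm_rpow_le_fourier (hp : 2 ≤ p) (f : 𝓢(V, F)) :
    ∫⁻ x, ‖f x‖ₑ ^ p ≤ (∫⁻ η, ‖𝓕 f η‖ₑ) ^ (p - 2) * ∫⁻ η, ‖𝓕 f η‖ₑ ^ (2 : ℝ) := by
  have hf (x : V) : f x = 𝓕 ⇑(𝓕 f : 𝓢(V, F)) (-x) := by
    rw [← Real.fourierInv_eq_fourier_neg, ← SchwartzMap.fourierInv_coe,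
      FourierTransform.fourierInv_fourier_eq]
  calc ∫⁻ x, ‖f x‖ₑ ^ p = ∫⁻ x, ‖𝓕 ⇑(𝓕 f : 𝓢(V, F)) x‖ₑ ^ p := by
        simp_rw [hf]
        exact lintegral_neg_eq_self fun x ↦ ‖𝓕 ⇑(𝓕 f : 𝓢(V, F)) x‖ₑ ^ p
    _ ≤ _ := lintegral_enorm_fourier_rpow_le hp (𝓕 f).integrable ((𝓕 f).memLp 2 volume)

end Interpolation

section Modulation

variable {V F : Type*} [NormedAddCommGroup V] [InnerProductSpace ℝ V] [FiniteDimensional ℝ V]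
  [MeasurableSpace V] [BorelSpace V] [NormedAddCommGroup F] [NormedSpace ℂ F]

/-- The modulation `x ↦ exp(2πi⟪a, x⟫) f(x)` of a Schwartz function, encoded as the translation by
`a` of its Fourier transform. -/
def modulate (a : V) (f : 𝓢(V, F)) : 𝓢(V, F) := 𝓕⁻ ((𝓕 f).compSubConstCLM ℂ a)

variable [CompleteSpace F]

theorem fourier_modulate (a : V) (f : 𝓢(V, F)) (η : V) : 𝓕 (modulate a f) η = 𝓕 f (η - a) := by
  rw [modulate, FourierTransform.fourier_fourierInv_eq, SchwartzMap.compSubConstCLM_apply]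

theorem modulate_apply (a : V) (f : 𝓢(V, F)) (x : V) :
    modulate a f x = cexp (↑(2 * π * ⟪a, x⟫) * I) • f x := by
  rw [eq_integral_exp_smul_fourier (modulate a f), eq_integral_exp_smul_fourier f,
    ← integral_smul, ← integral_add_right_eq_self _ a]
  refine integral_congr_ae (ae_of_all _ fun η ↦ ?_)
  simp only [fourier_modulate, add_sub_cancel_right, inner_add_left, smul_smul, ← Complex.exp_add]
  push_cast
  ring_nf

theorem bracketMul_modulate (k : ℝ) (a : V) (f : 𝓢(V, F)) :
    bracketMul k (modulate a f) = modulate a (bracketMul k f) := by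
  ext x
  rw [bracketMul_apply, modulate_apply, modulate_apply, bracketMul_apply, smul_comm]

theorem lintegral_fourier_bracketMul_modulate (k p : ℝ) (a : V) (f : 𝓢(V, F)) :
    ∫⁻ ξ, ‖𝓕 (bracketMul k (modulate a f)) ξ‖ₑ ^ p = ∫⁻ ξ, ‖𝓕 (bracketMul k f) ξ‖ₑ ^ p := by
  simp_rw [bracketMul_modulate, fourier_modulate]
  exact lintegral_sub_right_eq_self (fun ξ ↦ ‖𝓕 (bracketMul k f) ξ‖ₑ ^ p) a

theorem tendsto_lintegral_fourier_besselPotential_modulate {k r : ℝ} (hk : k < 0) (hr : 0 < r)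
    (f : 𝓢(V, F)) :
    Tendsto (fun a ↦ ∫⁻ η, ‖𝓕 (besselPotential k (modulate a f)) η‖ₑ ^ r)
      (Bornology.cobounded V) (𝓝 0) := by
  have : (Bornology.cobounded V).IsCountablyGenerated := comap_norm_atTop (E := V) ▸ inferInstance
  have htranslate (a : V) : ∫⁻ η, ‖𝓕 (besselPotential k (modulate a f)) η‖ₑ ^ r =
      ∫⁻ η, ‖japaneseBracket k ((2 * π) • (η + a)) • 𝓕 f η‖ₑ ^ r := by
    rw [← lintegral_add_right_eq_self _ a]
    simp_rw [fourier_besselPotential, fourier_modulate, add_sub_cancel_right]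
  have hbracket (η : V) : Tendsto (fun a ↦ japaneseBracket k ((2 * π) • (η + a)))
      (Bornology.cobounded V) (𝓝 0) := by
    refine (tendsto_japaneseBracket_cobounded hk).comp (tendsto_norm_atTop_iff_cobounded.1 ?_)
    simp_rw [norm_smul]
    exact (tendsto_norm_cobounded_atTop.comp (tendsto_const_add_cobounded η)).const_mul_atTop
      (norm_pos_iff.2 (by positivity))
  simp_rw [htranslate]
  rw [← lintegral_zero (α := V) (μ := volume)]
  refine tendsto_lintegral_filter_of_dominated_convergence (fun η ↦ ‖𝓕 f η‖ₑ ^ r)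
    (.of_forall fun a ↦ ?_) (.of_forall fun a ↦ ae_of_all _ fun η ↦ ?_)
    (lintegral_schwartz_rpow_ne_top hr _) (ae_of_all _ fun η ↦ ?_)
  · exact ((((continuous_japaneseBracket k).comp (by fun_prop)).smul
      (𝓕 f).continuous).enorm.measurable).pow_const r
  · rw [enorm_smul, Real.enorm_of_nonneg (japaneseBracket_pos _ _).le]
    gcongr
    exact mul_le_of_le_one_left' (ENNReal.ofReal_le_one.2 (japaneseBracket_le_one hk.le _))
  · have h := (((hbracket η).smul_const (𝓕 f η)).enorm).ennrpow_const r
    simpa [hr] using h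

end Modulation

section OrderNonneg

theorem exists_schwartz_hasCompactSupport_zero_notMem_tsupport (V : Type*)
    [NormedAddCommGroup V] [InnerProductSpace ℝ V] [FiniteDimensional ℝ V] [Nontrivial V] :
    ∃ f : 𝓢(V, ℂ), HasCompactSupport f ∧ (0 : V) ∉ tsupport f ∧ ∃ x, f x ≠ 0 := by
  obtain ⟨x, hx⟩ := exists_ne (0 : V)
  obtain ⟨g, hg0, hgc, hg, -, hgx⟩ :=
    exists_contDiff_tsupport_subset (n := ⊤) (isOpen_compl_singleton.mem_nhds hx)
  have hgc' : HasCompactSupport fun x ↦ (g x : ℂ) := hgc.comp_left Complex.ofReal_zero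
  refine ⟨hgc'.toSchwartzMap (Complex.ofRealCLM.contDiff.comp hg), hgc', fun h ↦ ?_, x, ?_⟩
  · exact hg0 (tsupport_comp_subset Complex.ofReal_zero g h) rfl
  · exact Complex.ofReal_ne_zero.2 (hgx ▸ one_ne_zero)

variable {V : Type*} [NormedAddCommGroup V] [InnerProductSpace ℝ V] [FiniteDimensional ℝ V]
  [MeasurableSpace V] [BorelSpace V]

theorem tendsto_lintegral_besselPotential_modulate {F : Type*} [NormedAddCommGroup F]
    [InnerProductSpace ℂ F] [CompleteSpace F] {k p : ℝ} (hk : k < 0) (hp : 2 ≤ p) (f : 𝓢(V, F)) :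
    Tendsto (fun a ↦ ∫⁻ x, ‖besselPotential k (modulate a f) x‖ₑ ^ p)
      (Bornology.cobounded V) (𝓝 0) := by
  have hp2 : 0 ≤ p - 2 := by linarith
  have hone := tendsto_lintegral_fourier_besselPotential_modulate hk one_pos f
  have htwo := tendsto_lintegral_fourier_besselPotential_modulate hk two_pos f
  simp only [ENNReal.rpow_one] at hone
  have hmul := ENNReal.Tendsto.mul (hone.ennrpow_const (p - 2)) (Or.inr ENNReal.zero_ne_top) htwo
    (Or.inr (ENNReal.rpow_ne_top_of_nonneg hp2 ENNReal.zero_ne_top))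
  rw [mul_zero] at hmul
  exact tendsto_of_tendsto_of_tendsto_of_le_of_le tendsto_const_nhds hmul (fun _ ↦ zero_le)
    fun _ ↦ lintegral_enorm_rpow_le_fourier hp _

theorem lintegral_enorm_rpow_ne_zero {F : Type*} [NormedAddCommGroup F] {p : ℝ} (hp : 0 < p)
    {u : V → F} (hu : Continuous u) {x : V} (hx : u x ≠ 0) : ∫⁻ x, ‖u x‖ₑ ^ p ≠ 0 := by
  rw [← pos_iff_ne_zero, lintegral_pos_iff_support (hu.enorm.measurable.pow_const p)]
  have hsupp : (Function.support fun x ↦ ‖u x‖ₑ ^ p) = {x | u x ≠ 0} := by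
    ext y; simp [hp]
  rw [hsupp]
  exact (isOpen_ne_fun hu continuous_const).measure_pos volume ⟨x, hx⟩

theorem lintegral_fourier_rpow_ne_zero {F : Type*} [NormedAddCommGroup F]
    [InnerProductSpace ℂ F] [CompleteSpace F] {p : ℝ} (hp : 0 < p) {u : V → F}
    (hu : Continuous u) (h1 : Integrable u) (h2 : MemLp u 2) {x : V} (hx : u x ≠ 0) :
    ∫⁻ ξ, ‖𝓕 u ξ‖ₑ ^ p ≠ 0 := by
  intro h
  have hzero : 𝓕 u =ᵐ[volume] 0 := by
    rw [lintegral_eq_zero_iff ((continuous_fourier h1).enorm.measurable.pow_const p)] at h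
    filter_upwards [h] with ξ hξ
    simpa [hp, hp.not_gt] using hξ
  refine lintegral_enorm_rpow_ne_zero two_pos hu hx ?_
  rw [← lintegral_enorm_fourier_sq h1 h2]
  exact lintegral_eq_zero_of_ae_eq_zero (hzero.mono fun ξ hξ ↦ by simp [hξ])

theorem nonneg_of_fourierBounded [Nontrivial V] {p k₁ k₂ : ℝ} (hp : 2 ≤ p)
    (h : FourierBounded V p k₁ k₂) : 0 ≤ k₁ := by
  obtain ⟨C, hC⟩ := h
  by_contra! hk
  obtain ⟨f, -, -, x, hx⟩ := exists_schwartz_hasCompactSupport_zero_notMem_tsupport V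
  have hf : ∫⁻ ξ, ‖𝓕 (bracketMul k₂ f) ξ‖ₑ ^ p ≠ 0 := by
    simp_rw [SchwartzMap.fourier_coe]
    refine lintegral_fourier_rpow_ne_zero (by linarith) (bracketMul k₂ f).continuous
      (bracketMul k₂ f).integrable ((bracketMul k₂ f).memLp 2 volume) (x := x) ?_
    rw [bracketMul_apply]
    exact smul_ne_zero (japaneseBracket_pos _ _).ne' hx
  have hlim := ENNReal.Tendsto.const_mul (a := C)
    (tendsto_lintegral_besselPotential_modulate hk hp f) (Or.inr ENNReal.coe_ne_top)
  rw [mul_zero] at hlim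
  refine hf (le_zero_iff.1 (ge_of_tendsto' hlim fun a ↦ ?_))
  rw [← lintegral_fourier_bracketMul_modulate k₂ p a]
  exact hC _

end OrderNonneg

section Dilation

variable {V F : Type*} [NormedAddCommGroup V] [InnerProductSpace ℝ V] [NormedAddCommGroup F]
  [NormedSpace ℂ F] {c : ℝ}

/-- The dilation `x ↦ f(c x)` of a Schwartz function. -/
def dilate (hc : c ≠ 0) (f : 𝓢(V, F)) : 𝓢(V, F) :=
  SchwartzMap.compCLMOfContinuousLinearEquiv ℂ
    (ContinuousLinearEquiv.smulLeft (Units.mk0 c hc)) f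

theorem dilate_apply (hc : c ≠ 0) (f : 𝓢(V, F)) (x : V) : dilate hc f x = f (c • x) := rfl

variable [FiniteDimensional ℝ V] [MeasurableSpace V] [BorelSpace V]

theorem lintegral_comp_smul (hc : c ≠ 0) (g : V → ℝ≥0∞) :
    ∫⁻ x, g (c • x) = ENNReal.ofReal |(c ^ Module.finrank ℝ V)⁻¹| * ∫⁻ x, g x := by
  rw [← smul_eq_mul, ← lintegral_smul_measure, ← Measure.map_addHaar_smul volume hc]
  exact (lintegral_map_equiv g (Homeomorph.smulOfNeZero c hc).toMeasurableEquiv).symm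

theorem fourier_comp_smul (hc : c ≠ 0) (u : V → F) (ξ : V) :
    𝓕 (fun x ↦ u (c • x)) ξ = |(c ^ Module.finrank ℝ V)⁻¹| • 𝓕 u (c⁻¹ • ξ) := by
  rw [Real.fourier_eq, Real.fourier_eq, ← Measure.integral_comp_smul volume]
  simp only [real_inner_smul_left, real_inner_smul_right, inv_mul_cancel_left₀ hc]

theorem lintegral_fourier_comp_smul (hc : 0 < c) {r : ℝ} (hr : 0 ≤ r) (u : V → F) :
    ∫⁻ ξ, ‖𝓕 (fun x ↦ u (c • x)) ξ‖ₑ ^ r =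
      ENNReal.ofReal (c ^ (Module.finrank ℝ V * (1 - r))) * ∫⁻ ξ, ‖𝓕 u ξ‖ₑ ^ r := by
  have hpow : |(c ^ Module.finrank ℝ V)⁻¹| ^ r * |((c⁻¹) ^ Module.finrank ℝ V)⁻¹| =
      c ^ (Module.finrank ℝ V * (1 - r)) := by
    rw [abs_of_pos (by positivity), abs_of_pos (by positivity), inv_pow, inv_inv,
      ← Real.rpow_natCast, ← Real.rpow_neg hc.le, ← Real.rpow_mul hc.le, ← Real.rpow_add hc]
    ring_nf
  simp_rw [fourier_comp_smul hc.ne', enorm_smul, ENNReal.mul_rpow_of_nonneg _ _ hr]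
  rw [lintegral_const_mul' _ _ (by simp [hr]),
    lintegral_comp_smul (inv_ne_zero hc.ne') (fun ξ ↦ ‖𝓕 u ξ‖ₑ ^ r), ← mul_assoc,
    Real.enorm_of_nonneg (abs_nonneg _), ENNReal.ofReal_rpow_of_nonneg (abs_nonneg _) hr,
    ← ENNReal.ofReal_mul (by positivity), hpow]

end Dilation

section DilationBesselPotential

variable {V F : Type*} [NormedAddCommGroup V] [InnerProductSpace ℝ V] [FiniteDimensional ℝ V]
  [MeasurableSpace V] [BorelSpace V] [NormedAddCommGroup F] [InnerProductSpace ℂ F]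
  [CompleteSpace F] {c k : ℝ}

theorem enorm_fourier_besselPotential_dilate_le (hk : 0 ≤ k) (hc : 0 < c) (hc1 : c ≤ 1)
    (f : 𝓢(V, F)) (η : V) :
    ‖𝓕 (besselPotential k (dilate hc.ne' f)) η‖ₑ ≤
      ‖𝓕 (fun x ↦ besselPotential k f (c • x)) η‖ₑ := by
  have hle : japaneseBracket k ((2 * π) • η) ≤ japaneseBracket k ((2 * π) • c⁻¹ • η) := by
    refine japaneseBracket_le_of_norm_le hk ?_
    rw [smul_comm, norm_smul c⁻¹, norm_inv, Real.norm_of_nonneg hc.le]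
    exact le_mul_of_one_le_left (norm_nonneg _) (one_le_inv₀ hc |>.2 hc1)
  have hdilate : 𝓕 (dilate hc.ne' f) η = |(c ^ Module.finrank ℝ V)⁻¹| • 𝓕 f (c⁻¹ • η) := by
    simp_rw [SchwartzMap.fourier_coe, ← fourier_comp_smul hc.ne']
    rfl
  rw [fourier_besselPotential, hdilate, fourier_comp_smul hc.ne', ← SchwartzMap.fourier_coe,
    fourier_besselPotential, smul_comm, enorm_smul, enorm_smul, enorm_smul, enorm_smul,
    Real.enorm_of_nonneg (japaneseBracket_pos _ _).le,
    Real.enorm_of_nonneg (japaneseBracket_pos _ _).le]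
  gcongr

theorem exists_lintegral_besselPotential_dilate_le (hk : 0 ≤ k) {p : ℝ} (hp : 2 ≤ p)
    (f : 𝓢(V, F)) : ∃ M : ℝ≥0, ∀ c (hc : 0 < c), c ≤ 1 →
      ∫⁻ x, ‖besselPotential k (dilate hc.ne' f) x‖ₑ ^ p ≤
        M * ENNReal.ofReal (c ^ (-Module.finrank ℝ V : ℝ)) := by
  let A (r : ℝ) : ℝ≥0∞ := ∫⁻ η, ‖𝓕 (besselPotential k f) η‖ₑ ^ r
  have hA {r : ℝ} (hr : 0 < r) : A r ≠ ⊤ := lintegral_schwartz_rpow_ne_top hr _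
  have hp2 : 0 ≤ p - 2 := by linarith
  have hbound {c : ℝ} (hc : 0 < c) (hc1 : c ≤ 1) {r : ℝ} (hr : 0 ≤ r) :
      ∫⁻ η, ‖𝓕 (besselPotential k (dilate hc.ne' f)) η‖ₑ ^ r ≤
        ENNReal.ofReal (c ^ (Module.finrank ℝ V * (1 - r))) * A r := by
    simp only [A, SchwartzMap.fourier_coe (besselPotential k f)]
    rw [← lintegral_fourier_comp_smul hc hr]
    gcongr
    exact enorm_fourier_besselPotential_dilate_le hk hc hc1 f _
  refine ⟨(A 1 ^ (p - 2) * A 2).toNNReal, fun c hc hc1 ↦ ?_⟩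
  rw [ENNReal.coe_toNNReal (ENNReal.mul_ne_top
    (ENNReal.rpow_ne_top_of_nonneg hp2 (hA one_pos)) (hA two_pos))]
  have hone := hbound hc hc1 zero_le_one
  have htwo := hbound hc hc1 zero_le_two
  simp only [sub_self, mul_zero, Real.rpow_zero, ENNReal.ofReal_one, one_mul,
    ENNReal.rpow_one] at hone
  calc ∫⁻ x, ‖besselPotential k (dilate hc.ne' f) x‖ₑ ^ p
      ≤ _ := lintegral_enorm_rpow_le_fourier hp _
    _ ≤ A 1 ^ (p - 2) *
        (ENNReal.ofReal (c ^ (Module.finrank ℝ V * (1 - 2) : ℝ)) * A 2) := by gcongr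
    _ = _ := by ring_nf

end DilationBesselPotential

section ScaledBracket

variable {V : Type*} [NormedAddCommGroup V]

/-- The weight `(c² + |x|²)^{k/2}`, which interpolates between `⟨x⟩ᵏ` at `c = 1` and its
homogeneous counterpart `|x|ᵏ` at `c = 0`. -/
def scaledBracket (k c : ℝ) (x : V) : ℝ := (c ^ 2 + ‖x‖ ^ 2) ^ (k / 2)

theorem scaledBracket_pos (k c : ℝ) {x : V} (hx : x ≠ 0) : 0 < scaledBracket k c x := by
  rw [scaledBracket]
  positivity

theorem japaneseBracket_eq_mul_scaledBracket [NormedSpace ℝ V] (k : ℝ) {c : ℝ} (hc : 0 < c)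
    (x : V) : japaneseBracket k x = c ^ (-k) * scaledBracket k c (c • x) := by
  have h : c ^ 2 + ‖c • x‖ ^ 2 = c ^ 2 * (1 + ‖x‖ ^ 2) := by
    rw [norm_smul, Real.norm_of_nonneg hc.le]
    ring
  rw [scaledBracket, h, Real.mul_rpow (by positivity) (by positivity), ← Real.rpow_two,
    ← Real.rpow_mul hc.le, mul_div_cancel₀ k two_ne_zero, ← mul_assoc, ← Real.rpow_add hc,
    neg_add_cancel, Real.rpow_zero, one_mul, japaneseBracket]

theorem continuous_scaledBracket_smul {F : Type*} [NormedAddCommGroup F] [NormedSpace ℝ F]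
    (k : ℝ) {f : V → F} (hf : Continuous f) (h0 : 0 ∉ tsupport f) :
    Continuous fun z : ℝ × V ↦ scaledBracket k z.1 z.2 • f z.2 := by
  refine continuous_iff_continuousAt.2 fun ⟨c, x⟩ ↦ ?_
  by_cases hx : x = 0
  · have hzero : ∀ᶠ y in 𝓝 x, f y = 0 := hx ▸ notMem_tsupport_iff_eventuallyEq.1 h0
    refine continuousAt_const (y := (0 : F)) |>.congr ?_
    filter_upwards [continuousAt_snd.eventually hzero] with z hz
    rw [hz, smul_zero]
  · refine ContinuousAt.smul (ContinuousAt.rpow_const (by fun_prop) (Or.inl ?_)) (by fun_prop)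
    positivity

end ScaledBracket

section DilationBracketMul

variable {V F : Type*} [NormedAddCommGroup V] [InnerProductSpace ℝ V] [FiniteDimensional ℝ V]
  [MeasurableSpace V] [BorelSpace V] [NormedAddCommGroup F] [NormedSpace ℂ F]

theorem continuous_fourier_of_hasCompactSupport {X : Type*} [TopologicalSpace X]
    {u : X → V → F} (hu : Continuous u.uncurry) {K : Set V} (hK : IsCompact K)
    (hsupp : ∀ c, ∀ x ∉ K, u c x = 0) (ξ : V) : Continuous fun c ↦ 𝓕 (u c) ξ := by
  simp_rw [Real.fourier_eq]
  refine continuousOn_univ.1 (continuousOn_integral_of_compact_support hK ?_ fun c x _ hx ↦ ?_)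
  · refine Continuous.continuousOn ?_
    exact (Real.continuous_fourierChar.comp (by fun_prop)).smul hu
  · rw [hsupp c x hx, smul_zero]

theorem lintegral_fourier_bracketMul_dilate {p : ℝ} (hp : 0 ≤ p) (k : ℝ) {c : ℝ} (hc : 0 < c)
    (f : 𝓢(V, F)) :
    ∫⁻ ξ, ‖𝓕 (bracketMul k (dilate hc.ne' f)) ξ‖ₑ ^ p =
      ENNReal.ofReal (c ^ (Module.finrank ℝ V * (1 - p) - k * p)) *
        ∫⁻ ξ, ‖𝓕 (fun x ↦ scaledBracket k c x • f x) ξ‖ₑ ^ p := by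
  have h (ξ : V) : 𝓕 (bracketMul k (dilate hc.ne' f)) ξ =
      c ^ (-k) • 𝓕 (fun x ↦ scaledBracket k c (c • x) • f (c • x)) ξ := by
    rw [SchwartzMap.fourier_coe, Real.fourier_eq, Real.fourier_eq, ← integral_smul]
    refine integral_congr_ae (ae_of_all _ fun x ↦ ?_)
    simp only [bracketMul_apply, dilate_apply, japaneseBracket_eq_mul_scaledBracket k hc x,
      mul_smul]
    rw [smul_comm]
  simp_rw [h, enorm_smul, ENNReal.mul_rpow_of_nonneg _ _ hp]
  rw [lintegral_const_mul' _ _ (by simp [hp]),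
    lintegral_fourier_comp_smul hc hp fun x ↦ scaledBracket k c x • f x,
    Real.enorm_of_nonneg (by positivity), ENNReal.ofReal_rpow_of_nonneg (by positivity) hp,
    ← mul_assoc, ← ENNReal.ofReal_mul (by positivity), ← Real.rpow_mul hc.le,
    ← Real.rpow_add hc]
  ring_nf

end DilationBracketMul

section OrderUpperBound

variable {V : Type*} [NormedAddCommGroup V] [InnerProductSpace ℝ V] [FiniteDimensional ℝ V]
  [MeasurableSpace V] [BorelSpace V] {p k₁ k₂ : ℝ}

theorem exists_lintegral_fourier_scaledBracket_smul_le (hp : 2 ≤ p) (hk₁ : 0 ≤ k₁)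
    (h : FourierBounded V p k₁ k₂) (f : 𝓢(V, ℂ)) : ∃ D : ℝ≥0, ∀ c, 0 < c → c ≤ 1 →
      ∫⁻ ξ, ‖𝓕 (fun x ↦ scaledBracket k₂ c x • f x) ξ‖ₑ ^ p ≤
        D * ENNReal.ofReal (c ^ (k₂ * p + Module.finrank ℝ V * (p - 2))) := by
  obtain ⟨C, hC⟩ := h
  obtain ⟨M, hM⟩ := exists_lintegral_besselPotential_dilate_le hk₁ hp f
  refine ⟨C * M, fun c hc hc1 ↦ ?_⟩
  set s : ℝ := Module.finrank ℝ V * (1 - p) - k₂ * p with hs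
  set I := ∫⁻ ξ, ‖𝓕 (fun x ↦ scaledBracket k₂ c x • f x) ξ‖ₑ ^ p
  calc I = ENNReal.ofReal (c ^ (-s)) * (ENNReal.ofReal (c ^ s) * I) := by
        rw [← mul_assoc, ← ENNReal.ofReal_mul (by positivity), ← Real.rpow_add hc,
          neg_add_cancel, Real.rpow_zero, ENNReal.ofReal_one, one_mul]
    _ ≤ ENNReal.ofReal (c ^ (-s)) *
        (C * (M * ENNReal.ofReal (c ^ (-Module.finrank ℝ V : ℝ)))) := by
        rw [← lintegral_fourier_bracketMul_dilate (by linarith) k₂ hc f]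
        gcongr
        exact (hC _).trans (mul_le_mul_right (hM c hc hc1) _)
    _ = C * M * (ENNReal.ofReal (c ^ (-s)) * ENNReal.ofReal (c ^ (-Module.finrank ℝ V : ℝ))) := by
        ring
    _ = _ := by
        rw [← ENNReal.ofReal_mul (by positivity), ← Real.rpow_add hc, ENNReal.coe_mul, hs]
        ring_nf

theorem lintegral_fourier_rpow_le_liminf {F X : Type*} [NormedAddCommGroup F] [NormedSpace ℂ F]
    [TopologicalSpace X] {u : X → V → F} (hu : Continuous u.uncurry) {K : Set V}
    (hK : IsCompact K) (hsupp : ∀ c, ∀ x ∉ K, u c x = 0) (p : ℝ) {c₀ : X} {l : Filter X}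
    [l.NeBot] [l.IsCountablyGenerated] (hl : l ≤ 𝓝 c₀) :
    ∫⁻ ξ, ‖𝓕 (u c₀) ξ‖ₑ ^ p ≤ liminf (fun c ↦ ∫⁻ ξ, ‖𝓕 (u c) ξ‖ₑ ^ p) l := by
  have hlim (ξ : V) : liminf (fun c ↦ ‖𝓕 (u c) ξ‖ₑ ^ p) l = ‖𝓕 (u c₀) ξ‖ₑ ^ p :=
    Tendsto.liminf_eq <|
      ((continuous_fourier_of_hasCompactSupport hu hK hsupp ξ).continuousAt.tendsto.mono_left
        hl).enorm.ennrpow_const p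
  have hint (c : X) : Integrable (u c) :=
    (hu.comp (by fun_prop : Continuous fun x ↦ (c, x))).integrable_of_hasCompactSupport
      (.intro hK (hsupp c))
  simp_rw [← hlim]
  exact lintegral_liminf_le fun c ↦ (continuous_fourier (hint c)).enorm.measurable.pow_const p

theorem le_of_fourierBounded [Nontrivial V] (hp : 2 ≤ p) (hk₁ : 0 ≤ k₁)
    (h : FourierBounded V p k₁ k₂) : k₂ * p ≤ -(Module.finrank ℝ V * (p - 2)) := by
  by_contra! hlt
  obtain ⟨f, hfc, hf0, x, hx⟩ := exists_schwartz_hasCompactSupport_zero_notMem_tsupport V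
  obtain ⟨D, hD⟩ := exists_lintegral_fourier_scaledBracket_smul_le hp hk₁ h f
  let u (c : ℝ) (x : V) : ℂ := scaledBracket k₂ c x • f x
  have hu : Continuous u.uncurry := continuous_scaledBracket_smul k₂ f.continuous hf0
  have hu0 : Continuous (u 0) := hu.comp (by fun_prop : Continuous fun x ↦ ((0 : ℝ), x))
  have hsupp (c : ℝ) (y : V) (hy : y ∉ tsupport f) : u c y = 0 := by
    simp [u, image_eq_zero_of_notMem_tsupport hy]
  set s : ℝ := k₂ * p + Module.finrank ℝ V * (p - 2)
  have hs : 0 < s := by linarith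
  have hpow : Tendsto (fun c : ℝ ↦ D * ENNReal.ofReal (c ^ s)) (𝓝[>] 0) (𝓝 0) := by
    have hcont : Continuous fun c : ℝ ↦ D * ENNReal.ofReal (c ^ s) :=
      (ENNReal.continuous_const_mul ENNReal.coe_ne_top).comp
        (ENNReal.continuous_ofReal.comp (Real.continuous_rpow_const hs.le))
    simpa [hs.ne'] using (hcont.tendsto 0).mono_left nhdsWithin_le_nhds
  have hlim : Tendsto (fun c ↦ ∫⁻ ξ, ‖𝓕 (u c) ξ‖ₑ ^ p) (𝓝[>] 0) (𝓝 0) :=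
    tendsto_of_tendsto_of_tendsto_of_le_of_le' tendsto_const_nhds hpow
      (.of_forall fun _ ↦ zero_le) <| by
        filter_upwards [Ioc_mem_nhdsGT (zero_lt_one (α := ℝ))] with c hc using hD c hc.1 hc.2
  refine lintegral_fourier_rpow_ne_zero (by linarith : 0 < p) hu0
    (hu0.integrable_of_hasCompactSupport (.intro hfc (hsupp 0)))
    (hu0.memLp_of_hasCompactSupport (.intro hfc (hsupp 0)))
    (smul_ne_zero (scaledBracket_pos k₂ 0 fun hx0 ↦ ?_).ne' hx) ?_
  · exact hf0 (hx0 ▸ subset_tsupport f hx)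
  · refine le_zero_iff.1 ((lintegral_fourier_rpow_le_liminf hu hfc hsupp p
      nhdsWithin_le_nhds).trans_eq hlim.liminf_eq)

theorem fourierBounded_iff [Nontrivial V] (hp : 2 ≤ p) :
    FourierBounded V p k₁ k₂ ↔
      0 ≤ k₁ ∧ k₂ ≤ -(2 * Module.finrank ℝ V * (1 / 2 - 1 / p)) := by
  have hp0 : 0 < p := by linarith
  have hiff : k₂ ≤ -(2 * Module.finrank ℝ V * (1 / 2 - 1 / p)) ↔
      k₂ * p ≤ -(Module.finrank ℝ V * (p - 2)) := by
    rw [← mul_le_mul_iff_left₀ hp0]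
    field_simp
  rw [hiff]
  exact ⟨fun h ↦ ⟨nonneg_of_fourierBounded hp h,
    le_of_fourierBounded hp (nonneg_of_fourierBounded hp h) h⟩,
    fun h ↦ fourierBounded_of_nonneg_of_le hp h.1 h.2⟩

end OrderUpperBound

section Conventions

variable {d : ℕ}

theorem FT_eq_fourier (u : E d → ℂ) (ξ : E d) : FT d u ξ = 𝓕 u ((2 * π)⁻¹ • ξ) := by
  rw [Real.fourier_eq', FT]
  refine integral_congr_ae (ae_of_all _ fun x ↦ ?_)
  simp only [smul_eq_mul, inner_smul_right]
  congr 2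
  push_cast
  field_simp

theorem FT_two_pi_smul_eq_fourier (u : E d → ℂ) (η : E d) : FT d u ((2 * π) • η) = 𝓕 u η := by
  rw [FT_eq_fourier, inv_smul_smul₀ (by positivity)]

theorem integral_comp_inv_two_pi_smul {F : Type*} [NormedAddCommGroup F] [NormedSpace ℝ F]
    (u : E d → F) : ∫ ξ, u ((2 * π)⁻¹ • ξ) = (2 * π) ^ d • ∫ η, u η := by
  rw [Measure.integral_comp_smul, finrank_euclideanSpace_fin, abs_of_pos (by positivity),
    inv_pow, inv_inv]

theorem bessel_eq_fourierInv (k : ℝ) (u : E d → ℂ) (x : E d) :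
    bessel d k u x = 𝓕⁻ (fun η ↦ japaneseBracket k ((2 * π) • η) • 𝓕 u η) x := by
  have h := Measure.integral_comp_smul volume (fun ξ : E d ↦
    cexp (I * (⟪x, ξ⟫ : ℂ)) * (japaneseBracket k ξ : ℂ) * FT d u ξ) (2 * π)
  rw [finrank_euclideanSpace_fin, abs_of_pos (by positivity), Complex.real_smul,
    Complex.ofReal_inv] at h
  rw [Real.fourierInv_eq']
  refine h.symm.trans (integral_congr_ae (ae_of_all _ fun η ↦ ?_))
  simp only [FT_two_pi_smul_eq_fourier, inner_smul_right, smul_eq_mul, Complex.real_smul,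
    real_inner_comm x η]
  rw [mul_assoc]
  congr 2
  push_cast
  ring

theorem bessel_eq_besselPotential (k : ℝ) (f : 𝓢(E d, ℂ)) :
    bessel d k f = besselPotential k f := by
  ext x
  simp_rw [bessel_eq_fourierInv, ← SchwartzMap.fourier_coe, ← fourier_besselPotential]
  rw [← SchwartzMap.fourierInv_coe, FourierTransform.fourierInv_fourier_eq]

theorem FT_FT (f : 𝓢(E d, ℂ)) (ξ : E d) : FT d (FT d f) ξ = (2 * π : ℂ) ^ d * f (-ξ) := by
  have h : FT d (FT d f) ξ = (2 * π) ^ d • 𝓕⁻ (𝓕 (f : E d → ℂ)) (-ξ) := by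
    rw [Real.fourierInv_eq', ← integral_comp_inv_two_pi_smul, FT]
    refine integral_congr_ae (ae_of_all _ fun x ↦ ?_)
    simp only [smul_eq_mul, inner_smul_left, inner_neg_right, FT_eq_fourier]
    congr 2
    push_cast
    simp
    field_simp
  rw [h, ← SchwartzMap.fourier_coe, ← SchwartzMap.fourierInv_coe,
    FourierTransform.fourierInv_fourier_eq]
  simp

theorem bessel_FT (k : ℝ) (f : 𝓢(E d, ℂ)) (x : E d) :
    bessel d k (FT d f) x = FT d (bracketMul k f) x := by
  rw [bessel, FT, ← integral_neg_eq_self, ← integral_const_mul]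
  refine integral_congr_ae (ae_of_all _ fun y ↦ ?_)
  simp only [FT_FT, bracketMul_apply, japaneseBracket, norm_neg, inner_neg_right, neg_neg,
    real_inner_comm y x, Complex.real_smul]
  push_cast
  field_simp

theorem integral_norm_bessel_FT_rpow (k p : ℝ) (f : 𝓢(E d, ℂ)) :
    ∫ x, ‖bessel d k (FT d f) x‖ ^ p = (2 * π) ^ d * ∫ η, ‖𝓕 (bracketMul k f) η‖ ^ p := by
  simp_rw [bessel_FT, FT_eq_fourier, SchwartzMap.fourier_coe]
  exact integral_comp_inv_two_pi_smul fun η ↦ ‖𝓕 (bracketMul k f : E d → ℂ) η‖ ^ p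

end Conventions

section BochnerForm

variable {V F : Type*} [NormedAddCommGroup V] [InnerProductSpace ℝ V] [FiniteDimensional ℝ V]
  [MeasurableSpace V] [BorelSpace V] [NormedAddCommGroup F] [NormedSpace ℝ F] {p k₁ k₂ : ℝ}

theorem ofReal_integral_norm_schwartz_rpow (hp : 1 ≤ p) (f : 𝓢(V, F)) :
    ENNReal.ofReal (∫ x, ‖f x‖ ^ p) = ∫⁻ x, ‖f x‖ₑ ^ p := by
  have h := (f.memLp (ENNReal.ofReal p) volume).integrable_norm_rpow (by simp; linarith) (by simp)
  rw [ENNReal.toReal_ofReal (by linarith)] at h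
  rw [ofReal_integral_eq_lintegral_ofReal h (ae_of_all _ fun x ↦ by positivity)]
  simp_rw [ofReal_norm_rpow _ (show 0 ≤ p by linarith)]

theorem fourierBounded_iff_exists_integral_le (hp : 1 ≤ p) :
    FourierBounded V p k₁ k₂ ↔ ∃ C > (0 : ℝ), ∀ f : 𝓢(V, ℂ),
      ∫ ξ, ‖𝓕 (bracketMul k₂ f) ξ‖ ^ p ≤ C * ∫ x, ‖besselPotential k₁ f x‖ ^ p := by
  have hofReal {C : ℝ} (hC : 0 ≤ C) (f : 𝓢(V, ℂ)) :
      ∫ ξ, ‖𝓕 (bracketMul k₂ f) ξ‖ ^ p ≤ C * ∫ x, ‖besselPotential k₁ f x‖ ^ p ↔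
      ∫⁻ ξ, ‖𝓕 (bracketMul k₂ f) ξ‖ₑ ^ p ≤
        ENNReal.ofReal C * ∫⁻ x, ‖besselPotential k₁ f x‖ₑ ^ p := by
    rw [← ofReal_integral_norm_schwartz_rpow hp, ← ofReal_integral_norm_schwartz_rpow hp,
      ← ENNReal.ofReal_mul hC, ENNReal.ofReal_le_ofReal_iff (by positivity)]
  constructor
  · rintro ⟨C, hC⟩
    refine ⟨C + 1, by positivity, fun f ↦ (hofReal (by positivity) f).2 ((hC f).trans ?_)⟩
    gcongr
    rw [ENNReal.le_ofReal_iff_toReal_le ENNReal.coe_ne_top (by positivity)]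
    simp
  · rintro ⟨C, hC0, hC⟩
    exact ⟨C.toNNReal, fun f ↦ (hofReal hC0.le f).1 (hC f)⟩

theorem rpow_one_div_le_mul_rpow_one_div_iff {a b C : ℝ} (hp : 0 < p) (ha : 0 ≤ a) (hb : 0 ≤ b)
    (hC : 0 ≤ C) : a ^ (1 / p) ≤ C * b ^ (1 / p) ↔ a ≤ C ^ p * b := by
  rw [← Real.rpow_le_rpow_iff (by positivity) (by positivity) hp,
    Real.mul_rpow hC (by positivity), ← Real.rpow_mul ha, ← Real.rpow_mul hb,
    one_div_mul_cancel hp.ne', Real.rpow_one, Real.rpow_one]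

theorem exists_bessel_bound_iff_fourierBounded {d : ℕ} (hp : 1 ≤ p) :
    (∃ C > (0 : ℝ), ∀ f : 𝓢(E d, ℂ), (∫ x, ‖bessel d k₂ (FT d f) x‖ ^ p) ^ (1 / p) ≤
      C * (∫ x, ‖bessel d k₁ f x‖ ^ p) ^ (1 / p)) ↔ FourierBounded (E d) p k₁ k₂ := by
  have hp0 : 0 < p := by linarith
  have hD : 0 < (2 * π) ^ d := by positivity
  have hpow {C : ℝ} (hC : 0 ≤ C) (f : 𝓢(E d, ℂ)) :
      (∫ x, ‖bessel d k₂ (FT d f) x‖ ^ p) ^ (1 / p) ≤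
        C * (∫ x, ‖bessel d k₁ f x‖ ^ p) ^ (1 / p) ↔
      ∫ ξ, ‖𝓕 (bracketMul k₂ f) ξ‖ ^ p ≤
        C ^ p / (2 * π) ^ d * ∫ x, ‖besselPotential k₁ f x‖ ^ p := by
    rw [rpow_one_div_le_mul_rpow_one_div_iff hp0 (by positivity) (by positivity) hC,
      integral_norm_bessel_FT_rpow, bessel_eq_besselPotential, div_mul_eq_mul_div,
      le_div_iff₀' hD]
  rw [fourierBounded_iff_exists_integral_le hp]
  constructor
  · rintro ⟨C, hC0, hC⟩
    exact ⟨C ^ p / (2 * π) ^ d, by positivity, fun f ↦ (hpow hC0.le f).1 (hC f)⟩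
  · rintro ⟨C, hC0, hC⟩
    refine ⟨((2 * π) ^ d * C) ^ p⁻¹, by positivity, fun f ↦ (hpow (by positivity) f).2 ?_⟩
    rw [Real.rpow_inv_rpow (by positivity) hp0.ne', mul_div_cancel_left₀ _ hD.ne']
    exact hC f

end BochnerForm

/-- for `2 ≤ p < ∞`, the Fourier transform is bounded from the Bessel
potential space `L^p_{k₁}(ℝ^d)` to `L^p_{k₂}(ℝ^d)` if and only if
`k₁ ≥ 0` and `k₂ ≤ -2d(1/2 - 1/p)`. -/
theorem stmt16 (d : ℕ) (hd : 1 ≤ d) (p : ℝ) (hp : 2 ≤ p) (k₁ k₂ : ℝ) :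
    (∃ C > (0 : ℝ), ∀ f : SchwartzMap (E d) ℂ,
        (∫ x : E d, ‖bessel d k₂ (FT d (⇑f)) x‖ ^ p) ^ (1 / p) ≤
          C * (∫ x : E d, ‖bessel d k₁ (⇑f) x‖ ^ p) ^ (1 / p)) ↔
      (0 ≤ k₁ ∧ k₂ ≤ -(2 * d * (1 / 2 - 1 / p))) := by
  have : Nontrivial (E d) := Module.nontrivial_of_finrank_pos (R := ℝ) (by
    rwa [finrank_euclideanSpace_fin])
  rw [exists_bessel_bound_iff_fourierBounded (by linarith), fourierBounded_iff hp,
    finrank_euclideanSpace_fin]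
end
end

section
/- Let d ≥ 1, 1 < p ≤ 2, and k = 2d(1/p − 1/2). There exists a constant C > 0 such that for every Schwartz function f on ℝ^d: (∫_{ℝ^d} (1+|ξ|²)^{−kp/2} |ℱf(ξ)|^p dξ)^{1/p} ≤ C·‖f‖_{L^p(ℝ^d)}. -/
open MeasureTheory Complex Real
open scoped ENNReal RealInnerProductSpace

noncomputable section

/-!
On an `n`-dimensional space, the measure `|ξ|⁻²ⁿ dξ` gives `{ξ | s < |ξ|ⁿ}` mass `|B| / s`, where
`B` is the unit ball. Since `|𝓕f|` is bounded by `‖f‖₁`, the map `f ↦ |ξ|ⁿ 𝓕f` is therefore of weak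
type (1, 1) with respect to this measure, and by Plancherel it is of type (2, 2). Marcinkiewicz
interpolation, splitting `f` at height `t` by a smooth cutoff of `|f|` so that both pieces remain
Schwartz functions, bounds it on `Lᵖ` for `1 < p < 2`, which is the inequality with the homogeneous
weight `|ξ|^(-n(2 - p))`. That weight dominates `(1 + |ξ|²)^(-n(2 - p)/2)`.
-/

open Module Set Metric
open scoped NNReal FourierTransform SchwartzMap

section Interpolation

variable {α β : Type*} [MeasurableSpace α] [MeasurableSpace β] {μ : Measure α} {ν : Measure β}

theorem lintegral_setLIntegral_preimage_swap [SFinite μ] [SFinite ν] {s : Set (β × α)}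
    (hs : MeasurableSet s) {f : β × α → ℝ≥0∞} (hf : Measurable f) :
    ∫⁻ y, ∫⁻ x in {x | (y, x) ∈ s}, f (y, x) ∂μ ∂ν =
      ∫⁻ x, ∫⁻ y in {y | (y, x) ∈ s}, f (y, x) ∂ν ∂μ := by
  have hy (y : β) : MeasurableSet {x | (y, x) ∈ s} := measurable_prodMk_left hs
  have hx (x : α) : MeasurableSet {y | (y, x) ∈ s} := measurable_prodMk_right hs
  simp_rw [← lintegral_indicator (hy _), ← lintegral_indicator (hx _)]
  exact lintegral_lintegral_swap (f := fun y x ↦ s.indicator f (y, x))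
    (hf.indicator hs).aemeasurable

theorem measurable_setLIntegral_preimage [SFinite μ] {s : Set (β × α)}
    (hs : MeasurableSet s) {f : β × α → ℝ≥0∞} (hf : Measurable f) :
    Measurable fun y ↦ ∫⁻ x in {x | (y, x) ∈ s}, f (y, x) ∂μ := by
  have hy (y : β) : MeasurableSet {x | (y, x) ∈ s} := measurable_prodMk_left hs
  simp_rw [← lintegral_indicator (hy _)]
  exact (hf.indicator hs).lintegral_prod_right'

theorem div_rpow_mul_rpow_sub_one {a t : ℝ} (ha : 0 ≤ a) (ht : 0 < t) (p q : ℝ) :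
    (a / t) ^ q * t ^ (p - 1) = a ^ q * t ^ (p - q - 1) := by
  rw [div_rpow ha ht.le, div_mul_eq_mul_div, mul_div_assoc, ← rpow_sub ht]
  ring_nf

theorem setLIntegral_Ioo_div_rpow_mul_rpow {a p q : ℝ} (ha : 0 ≤ a) (hqp : q < p)
    (hp : 0 < p) :
    ∫⁻ t in Ioo 0 a, ENNReal.ofReal ((a / t) ^ q * t ^ (p - 1)) =
      ENNReal.ofReal ((p - q)⁻¹) * ENNReal.ofReal (a ^ p) := by
  rcases ha.eq_or_lt with rfl | ha
  · simp [zero_rpow hp.ne']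
  have hint : IntervalIntegrable (fun t : ℝ ↦ a ^ q * t ^ (p - q - 1)) volume 0 a :=
    (intervalIntegral.intervalIntegrable_rpow' (by linarith)).const_mul _
  calc
    _ = ∫⁻ t in Ioc 0 a, ENNReal.ofReal (a ^ q * t ^ (p - q - 1)) := by
      rw [← restrict_Ioo_eq_restrict_Ioc]
      refine setLIntegral_congr_fun measurableSet_Ioo fun t ht ↦ ?_
      simp only [div_rpow_mul_rpow_sub_one ha.le ht.1]
    _ = ENNReal.ofReal (∫ t in 0..a, a ^ q * t ^ (p - q - 1)) := by
      rw [intervalIntegral.integral_of_le ha.le]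
      refine (ofReal_integral_eq_lintegral_ofReal hint.1 ?_).symm
      exact ae_restrict_of_forall_mem measurableSet_Ioc fun t ht ↦
        mul_nonneg (by positivity) (rpow_nonneg ht.1.le _)
    _ = ENNReal.ofReal ((p - q)⁻¹ * a ^ p) := by
      rw [intervalIntegral.integral_const_mul, integral_rpow (Or.inl (by linarith)),
        sub_add_cancel, zero_rpow (by linarith), sub_zero, ← mul_div_assoc, ← rpow_add ha,
        add_sub_cancel, div_eq_inv_mul]
    _ = _ := ENNReal.ofReal_mul (by simpa using hqp.le)

theorem setLIntegral_Ioi_div_rpow_mul_rpow {a c p r : ℝ} (ha : 0 ≤ a) (hc : 0 < c)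
    (hp : 0 < p) (hpr : p < r) :
    ∫⁻ t in Ioi (a / c), ENNReal.ofReal ((a / t) ^ r * t ^ (p - 1)) =
      ENNReal.ofReal (c ^ (r - p) * (r - p)⁻¹) * ENNReal.ofReal (a ^ p) := by
  rcases ha.eq_or_lt with rfl | ha
  · simp [zero_rpow hp.ne', zero_rpow (hp.trans hpr).ne']
  have hac : 0 < a / c := by positivity
  have hint : IntegrableOn (fun t : ℝ ↦ a ^ r * t ^ (p - r - 1)) (Ioi (a / c)) :=
    (integrableOn_Ioi_rpow_of_lt (by linarith) hac).const_mul _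
  calc
    _ = ∫⁻ t in Ioi (a / c), ENNReal.ofReal (a ^ r * t ^ (p - r - 1)) :=
      setLIntegral_congr_fun measurableSet_Ioi fun t ht ↦ by
        simp only [div_rpow_mul_rpow_sub_one ha.le (hac.trans ht)]
    _ = ENNReal.ofReal (∫ t in Ioi (a / c), a ^ r * t ^ (p - r - 1)) := by
      refine (ofReal_integral_eq_lintegral_ofReal hint ?_).symm
      exact ae_restrict_of_forall_mem measurableSet_Ioi fun t ht ↦
        mul_nonneg (by positivity) (rpow_nonneg (hac.trans ht).le _)
    _ = ENNReal.ofReal (c ^ (r - p) * (r - p)⁻¹ * a ^ p) := by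
      rw [integral_const_mul, integral_Ioi_rpow_of_lt (by linarith) hac, sub_add_cancel,
        div_rpow ha.le hc.le, ← neg_sub r p, rpow_neg hc.le, neg_div_neg_eq, neg_sub,
        div_inv_eq_mul, ← add_sub_cancel r p, rpow_add ha]
      simp only [add_sub_cancel, div_eq_mul_inv]
      ring_nf
    _ = _ := ENNReal.ofReal_mul (mul_nonneg (by positivity) (by simpa using hpr.le))

variable [SFinite μ] {u : α → ℝ} {p q r c : ℝ}

theorem lintegral_setLIntegral_lt_div_rpow (hu0 : 0 ≤ u) (hu : Measurable u) (hqp : q < p)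
    (hp : 0 < p) :
    ∫⁻ t in Ioi (0 : ℝ), ∫⁻ x in {x | t < u x},
        ENNReal.ofReal ((u x / t) ^ q * t ^ (p - 1)) ∂μ =
      ENNReal.ofReal ((p - q)⁻¹) * ∫⁻ x, ENNReal.ofReal (u x ^ p) ∂μ := by
  have hs : MeasurableSet {z : ℝ × α | z.1 < u z.2} := measurableSet_lt (by fun_prop) (by fun_prop)
  rw [← lintegral_const_mul _ (by fun_prop)]
  refine (lintegral_setLIntegral_preimage_swap hs
    (f := fun z ↦ ENNReal.ofReal ((u z.2 / z.1) ^ q * z.1 ^ (p - 1))) (by fun_prop)).trans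
    (lintegral_congr fun x ↦ ?_)
  rw [← setLIntegral_Ioo_div_rpow_mul_rpow (hu0 x) hqp hp, ← Iio_inter_Ioi,
    ← Measure.restrict_restrict measurableSet_Iio]
  rfl

theorem lintegral_setLIntegral_gt_div_rpow (hu0 : 0 ≤ u) (hu : Measurable u) (hc : 0 < c)
    (hp : 0 < p) (hpr : p < r) :
    ∫⁻ t in Ioi (0 : ℝ), ∫⁻ x in {x | u x < c * t},
        ENNReal.ofReal ((u x / t) ^ r * t ^ (p - 1)) ∂μ =
      ENNReal.ofReal (c ^ (r - p) * (r - p)⁻¹) * ∫⁻ x, ENNReal.ofReal (u x ^ p) ∂μ := by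
  have hs : MeasurableSet {z : ℝ × α | u z.2 < c * z.1} :=
    measurableSet_lt (by fun_prop) (by fun_prop)
  rw [← lintegral_const_mul _ (by fun_prop)]
  refine (lintegral_setLIntegral_preimage_swap hs
    (f := fun z ↦ ENNReal.ofReal ((u z.2 / z.1) ^ r * z.1 ^ (p - 1))) (by fun_prop)).trans
    (lintegral_congr fun x ↦ ?_)
  have hset : {t | u x < c * t} ∩ Ioi 0 = Ioi (u x / c) := by
    ext t
    simp only [mem_inter_iff, mem_ofPred_eq, mem_Ioi, div_lt_iff₀' hc, and_iff_left_iff_imp]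
    exact fun h ↦ pos_of_mul_pos_right ((hu0 x).trans_lt h) hc.le
  rw [← setLIntegral_Ioi_div_rpow_mul_rpow (hu0 x) hc hp hpr, ← hset,
    ← Measure.restrict_restrict (measurableSet_lt (by fun_prop) (by fun_prop))]
  rfl

theorem lintegral_rpow_le_of_meas_lt_le {v : β → ℝ} {A B : ℝ≥0∞} (hu0 : 0 ≤ u)
    (hu : Measurable u) (hv0 : 0 ≤ v) (hv : AEMeasurable v ν) (hc : 0 < c) (hp : 0 < p)
    (hqp : q < p) (hpr : p < r)
    (hlevel : ∀ t > 0, ν {y | t < v y} ≤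
      A * ∫⁻ x in {x | t < u x}, ENNReal.ofReal ((u x / t) ^ q) ∂μ +
        B * ∫⁻ x in {x | u x < c * t}, ENNReal.ofReal ((u x / t) ^ r) ∂μ) :
    ∫⁻ y, ENNReal.ofReal (v y ^ p) ∂ν ≤
      ENNReal.ofReal p * (A * ENNReal.ofReal ((p - q)⁻¹) +
        B * ENNReal.ofReal (c ^ (r - p) * (r - p)⁻¹)) *
          ∫⁻ x, ENNReal.ofReal (u x ^ p) ∂μ := by
  let high (t : ℝ) := ∫⁻ x in {x | t < u x}, ENNReal.ofReal ((u x / t) ^ q * t ^ (p - 1)) ∂μ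
  let low (t : ℝ) := ∫⁻ x in {x | u x < c * t}, ENNReal.ofReal ((u x / t) ^ r * t ^ (p - 1)) ∂μ
  have hhigh : Measurable high := measurable_setLIntegral_preimage
    (f := fun z : ℝ × α ↦ ENNReal.ofReal ((u z.2 / z.1) ^ q * z.1 ^ (p - 1)))
    (s := {z | z.1 < u z.2}) (measurableSet_lt (by fun_prop) (by fun_prop)) (by fun_prop)
  have hlow : Measurable low := measurable_setLIntegral_preimage
    (f := fun z : ℝ × α ↦ ENNReal.ofReal ((u z.2 / z.1) ^ r * z.1 ^ (p - 1)))
    (s := {z | u z.2 < c * z.1}) (measurableSet_lt (by fun_prop) (by fun_prop)) (by fun_prop)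
  rw [lintegral_rpow_eq_lintegral_meas_lt_mul _ (.of_forall hv0) hv hp, mul_assoc]
  gcongr
  calc
    _ ≤ ∫⁻ t in Ioi (0 : ℝ), (A * high t + B * low t) := by
      refine setLIntegral_mono' measurableSet_Ioi fun t ht ↦
        (mul_le_mul_left (hlevel t ht) _).trans_eq ?_
      have hpow (s x : ℝ) : ENNReal.ofReal ((x / t) ^ s * t ^ (p - 1)) =
          ENNReal.ofReal ((x / t) ^ s) * ENNReal.ofReal (t ^ (p - 1)) :=
        ENNReal.ofReal_mul' (rpow_nonneg (le_of_lt ht) _)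
      simp only [high, low, hpow, add_mul, mul_assoc,
        lintegral_mul_const' _ _ ENNReal.ofReal_ne_top]
    _ = A * (∫⁻ t in Ioi (0 : ℝ), high t) + B * ∫⁻ t in Ioi (0 : ℝ), low t := by
      rw [lintegral_add_left (by fun_prop), lintegral_const_mul _ hhigh,
        lintegral_const_mul _ hlow]
    _ = _ := by
      rw [lintegral_setLIntegral_lt_div_rpow hu0 hu hqp hp,
        lintegral_setLIntegral_gt_div_rpow hu0 hu hc hp hpr]
      ring

end Interpolation

section Polar

variable {V : Type*} [NormedAddCommGroup V] [NormedSpace ℝ V] [FiniteDimensional ℝ V]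
  [MeasurableSpace V] [BorelSpace V] (μ : Measure V) [μ.IsAddHaarMeasure]

theorem lintegral_comp_smul_s17 {f : V → ℝ≥0∞} (hf : Measurable f) {r : ℝ} (hr : r ≠ 0) :
    ∫⁻ x, f (r • x) ∂μ = ENNReal.ofReal |(r ^ finrank ℝ V)⁻¹| * ∫⁻ x, f x ∂μ := by
  rw [← lintegral_map hf (measurable_const_smul r), Measure.map_addHaar_smul μ hr,
    lintegral_smul_measure, smul_eq_mul]

theorem lintegral_fun_norm_addHaar [Nontrivial V] {f : ℝ → ℝ≥0∞} (hf : Measurable f) :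
    ∫⁻ x, f ‖x‖ ∂μ = finrank ℝ V * μ (ball 0 1) *
      ∫⁻ y in Ioi (0 : ℝ), ENNReal.ofReal (y ^ (finrank ℝ V - 1)) * f y := by
  have hg : Measurable fun y : Ioi (0 : ℝ) ↦ f y := by fun_prop
  calc
    _ = ∫⁻ x : ({0}ᶜ : Set V), f ‖x.1‖ ∂μ.comap (↑) := by
      rw [lintegral_subtype_comap (measurableSet_singleton _).compl fun x ↦ f ‖x‖,
        restrict_compl_singleton]
    _ = ∫⁻ x, f x.2 ∂μ.toSphere.prod (.volumeIoiPow (finrank ℝ V - 1)) := by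
      simpa using μ.measurePreserving_homeomorphUnitSphereProd.lintegral_comp
        (hg.comp measurable_snd)
    _ = μ.toSphere univ * ∫⁻ y : Ioi (0 : ℝ), f y ∂.volumeIoiPow (finrank ℝ V - 1) := by
      simpa using lintegral_prod_mul (μ := μ.toSphere) aemeasurable_const hg.aemeasurable (f := 1)
    _ = _ := by
      rw [μ.toSphere_apply_univ, Measure.volumeIoiPow,
        lintegral_withDensity_eq_lintegral_mul _ (by fun_prop) hg,
        ← lintegral_subtype_comap measurableSet_Ioi]
      rfl

/-- The measure `|x|^{-2n} dμ(x)` on a normed space of dimension `n`, for which `f ↦ |ξ|ⁿ 𝓕f` is of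
weak type `(1, 1)` and of type `(2, 2)`. The inverse is taken in `ℝ≥0∞`, so the density is infinite
at the origin. -/
def paleyMeasure : Measure V :=
  μ.withDensity fun x ↦ (‖x‖ₑ ^ (2 * finrank ℝ V))⁻¹

theorem setLIntegral_Ioi_pow_mul_inv_pow {n : ℕ} (hn : n ≠ 0) {r : ℝ} (hr : 0 < r) :
    ∫⁻ y in Ioi r, ENNReal.ofReal (y ^ (n - 1)) * (ENNReal.ofReal y ^ (2 * n))⁻¹ =
      ENNReal.ofReal ((r ^ n)⁻¹ / n) := by
  have hn0 : (0 : ℝ) < n := by positivity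
  have hlt : (-n - 1 : ℝ) < -1 := by linarith
  calc
    _ = ∫⁻ y in Ioi r, ENNReal.ofReal (y ^ (-n - 1 : ℝ)) := by
      refine setLIntegral_congr_fun measurableSet_Ioi fun y hy ↦ ?_
      have hy : 0 < y := hr.trans hy
      change ENNReal.ofReal (y ^ (n - 1)) * (ENNReal.ofReal y ^ (2 * n))⁻¹ = _
      rw [← ENNReal.ofReal_pow hy.le, ← ENNReal.ofReal_inv_of_pos (by positivity),
        ← ENNReal.ofReal_mul (by positivity), ← rpow_natCast, ← rpow_natCast, ← rpow_neg hy.le,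
        ← rpow_add hy, Nat.cast_pred (Nat.pos_of_ne_zero hn)]
      push_cast
      ring_nf
    _ = _ := by
      rw [← ofReal_integral_eq_lintegral_ofReal (integrableOn_Ioi_rpow_of_lt hlt hr)
        (ae_restrict_of_forall_mem measurableSet_Ioi fun y hy ↦ rpow_nonneg (hr.trans hy).le _),
        integral_Ioi_rpow_of_lt hlt hr, sub_add_cancel, neg_div_neg_eq, rpow_neg hr.le,
        rpow_natCast]

theorem paleyMeasure_lt_norm_pow [Nontrivial V] {s : ℝ} (hs : 0 < s) :
    paleyMeasure μ {x | s < ‖x‖ ^ finrank ℝ V} = μ (ball 0 1) / ENNReal.ofReal s := by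
  set n := finrank ℝ V with hn
  have hn0 : n ≠ 0 := finrank_pos.ne'
  obtain ⟨r, hr, rfl⟩ : ∃ r > 0, r ^ n = s :=
    ⟨s ^ (n⁻¹ : ℝ), by positivity, rpow_inv_natCast_pow hs.le hn0⟩
  have hset : {x : V | r ^ n < ‖x‖ ^ n} = norm ⁻¹' Ioi r := by
    ext x
    exact pow_lt_pow_iff_left₀ hr.le (norm_nonneg x) hn0
  have hmeas : MeasurableSet (norm ⁻¹' Ioi r : Set V) := measurable_norm measurableSet_Ioi
  calc
    _ = ∫⁻ x, (Ioi r).indicator (fun y ↦ (ENNReal.ofReal y ^ (2 * n))⁻¹) ‖x‖ ∂μ := by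
      rw [hset, paleyMeasure, withDensity_apply _ hmeas, ← lintegral_indicator hmeas]
      simp only [indicator, mem_preimage, ofReal_norm, ← hn]
    _ = n * μ (ball 0 1) * ∫⁻ y in Ioi r,
        ENNReal.ofReal (y ^ (n - 1)) * (ENNReal.ofReal y ^ (2 * n))⁻¹ := by
      rw [lintegral_fun_norm_addHaar μ (Measurable.indicator (by fun_prop) measurableSet_Ioi)]
      simp_rw [← indicator_mul_right _ fun y ↦ ENNReal.ofReal (y ^ (finrank ℝ V - 1))]
      rw [setLIntegral_indicator measurableSet_Ioi, Ioi_inter_Ioi, sup_of_le_left hr.le]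
    _ = _ := by
      rw [setLIntegral_Ioi_pow_mul_inv_pow hn0 hr, ENNReal.ofReal_div_of_pos (by positivity),
        ENNReal.ofReal_inv_of_pos hs, ENNReal.ofReal_natCast, mul_comm (n : ℝ≥0∞), mul_assoc,
        ENNReal.mul_div_cancel (by simpa using hn0) (by simp), div_eq_mul_inv]

end Polar

section Truncation

variable {V F : Type*} [NormedAddCommGroup V] [NormedSpace ℝ V]
  [NormedAddCommGroup F] [NormedSpace ℝ F]

theorem exists_contDiff_cutoff_norm (𝕜 : Type*) [RCLike 𝕜] [InnerProductSpace 𝕜 F]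
    {f : V → F} {m : ℕ∞} (hf : ContDiff ℝ m f) {t : ℝ} (ht : 0 < t) :
    ∃ ψ : V → ℝ, ContDiff ℝ m ψ ∧ (∀ x, ψ x ∈ Icc 0 1) ∧ (∀ x, ‖f x‖ ≤ t → ψ x = 0) ∧
      ∀ x, 2 * t ≤ ‖f x‖ → ψ x = 1 := by
  refine ⟨fun x ↦ smoothTransition (‖f x‖ ^ 2 / t ^ 2 - 1), ?_, fun x ↦ ?_, fun x hx ↦ ?_,
    fun x hx ↦ ?_⟩
  · exact smoothTransition.contDiff.comp (((hf.norm_sq 𝕜).div_const _).sub contDiff_const)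
  · exact ⟨smoothTransition.nonneg _, smoothTransition.le_one _⟩
  · apply smoothTransition.zero_of_nonpos
    rw [sub_nonpos, div_le_one (by positivity)]
    gcongr
  · apply smoothTransition.one_of_one_le
    rw [le_sub_iff_add_le, le_div_iff₀ (by positivity)]
    nlinarith

variable [ProperSpace V]

theorem exists_schwartz_add_eq_of_truncation (𝕜 : Type*) [RCLike 𝕜]
    [InnerProductSpace 𝕜 F] (f : 𝓢(V, F)) {t : ℝ} (ht : 0 < t) :
    ∃ g h : 𝓢(V, F), g + h = f ∧
      (∀ x, ‖g x‖ₑ ≤ {x | t < ‖f x‖}.indicator (‖f ·‖ₑ) x) ∧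
      ∀ x, ‖h x‖ₑ ≤ {x | ‖f x‖ < 2 * t}.indicator (‖f ·‖ₑ) x := by
  obtain ⟨ψ, hψ, hψ_mem, hψ_zero, hψ_one⟩ := exists_contDiff_cutoff_norm 𝕜 (f.smooth ⊤) ht
  have hsupp : HasCompactSupport fun x ↦ ψ x • f x := by
    have hlim : Filter.Tendsto (fun x ↦ ‖f x‖) (Filter.cocompact V) (nhds 0) := by
      simpa using f.toZeroAtInfty.zero_at_infty'.norm
    obtain ⟨K, hK, hKt⟩ := Filter.mem_cocompact.1 (hlim.eventually_lt_const ht)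
    exact .intro hK fun x hx ↦ by rw [hψ_zero x (le_of_lt (hKt hx)), zero_smul]
  let g := hsupp.toSchwartzMap (hψ.smul (f.smooth ⊤))
  have hg (x : V) : g x = ψ x • f x := rfl
  have hh (x : V) : (f - g) x = (1 - ψ x) • f x := by
    rw [sub_apply, hg, sub_smul, one_smul]
  have enorm_smul_le {a : ℝ} (ha : a ∈ Icc 0 1) (x : V) : ‖a • f x‖ₑ ≤ ‖f x‖ₑ := by
    rw [enorm_le_iff_norm_le, norm_smul, Real.norm_of_nonneg ha.1]
    exact mul_le_of_le_one_left (norm_nonneg _) ha.2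
  refine ⟨g, f - g, add_sub_cancel g f, fun x ↦ ?_, fun x ↦ ?_⟩
  · by_cases hx : x ∈ {x | t < ‖f x‖}
    · simpa only [hg, indicator_of_mem hx] using enorm_smul_le (hψ_mem x) x
    · simp [hg, hψ_zero x (not_lt.1 hx)]
  · by_cases hx : x ∈ {x | ‖f x‖ < 2 * t}
    · simpa only [hh, indicator_of_mem hx] using
        enorm_smul_le (Icc.one_sub_mem (hψ_mem x)) x
    · simp [hh, hψ_one x (not_lt.1 hx)]

end Truncation

section HardyLittlewoodPaley

theorem ofReal_norm_pow_mul_norm {V F : Type*} [SeminormedAddCommGroup V]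
    [SeminormedAddCommGroup F] (x : V) (y : F) (n : ℕ) :
    ENNReal.ofReal (‖x‖ ^ n * ‖y‖) = ‖x‖ₑ ^ n * ‖y‖ₑ := by
  rw [ENNReal.ofReal_mul (by positivity), ENNReal.ofReal_pow (norm_nonneg x), ofReal_norm,
    ofReal_norm]

theorem lintegral_comp_le_setLIntegral_comp {α : Type*} [MeasurableSpace α] {μ : Measure α}
    {φ : ℝ≥0∞ → ℝ≥0∞} (hφ : Monotone φ) (hφ0 : φ 0 = 0) {s : Set α} (hs : MeasurableSet s)
    {f g : α → ℝ≥0∞} (hgf : ∀ x, g x ≤ s.indicator f x) :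
    ∫⁻ x, φ (g x) ∂μ ≤ ∫⁻ x in s, φ (f x) ∂μ := by
  rw [← lintegral_indicator hs]
  refine lintegral_mono fun x ↦ (hφ (hgf x)).trans_eq ?_
  exact congr_fun (indicator_comp_of_zero hφ0).symm x

variable {V F : Type*} [NormedAddCommGroup V] [InnerProductSpace ℝ V] [FiniteDimensional ℝ V]
  [MeasurableSpace V] [BorelSpace V] [NormedAddCommGroup F] [InnerProductSpace ℂ F]

theorem lintegral_enorm_fourier_sq_s17 [CompleteSpace F] (f : 𝓢(V, F)) :
    ∫⁻ ξ, ‖𝓕 f ξ‖ₑ ^ 2 = ∫⁻ x, ‖f x‖ₑ ^ 2 := by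
  have ofReal_integral_sq (g : 𝓢(V, F)) :
      ENNReal.ofReal (∫ x, ‖g x‖ ^ 2) = ∫⁻ x, ‖g x‖ₑ ^ 2 := by
    have hg : Integrable fun x ↦ ‖g x‖ ^ 2 := (g.memLp 2).integrable_norm_pow two_ne_zero
    rw [ofReal_integral_eq_lintegral_ofReal hg (.of_forall fun _ ↦ by positivity)]
    simp only [ENNReal.ofReal_pow (norm_nonneg _), ofReal_norm]
  rw [← ofReal_integral_sq, ← ofReal_integral_sq, f.integral_norm_sq_fourier]

theorem paleyMeasure_lt_norm_pow_mul_norm_fourier_le_lintegral_sq [CompleteSpace F]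
    (f : 𝓢(V, F)) {t : ℝ} (ht : 0 < t) :
    paleyMeasure volume {ξ : V | t < ‖ξ‖ ^ finrank ℝ V * ‖𝓕 f ξ‖} ≤
      ∫⁻ x, (‖f x‖ₑ / ENNReal.ofReal t) ^ 2 := by
  set n := finrank ℝ V
  have hFm : Measurable fun ξ ↦ ‖𝓕 f ξ‖ₑ := (𝓕 f).continuous.enorm.measurable
  calc
    _ ≤ paleyMeasure volume {ξ : V | ENNReal.ofReal t ^ 2 ≤ (‖ξ‖ₑ ^ n * ‖𝓕 f ξ‖ₑ) ^ 2} := by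
      refine measure_mono fun ξ (hξ : t < _) ↦ ?_
      rw [mem_ofPred_eq, ← ofReal_norm_pow_mul_norm]
      gcongr
    _ ≤ (∫⁻ ξ, (‖ξ‖ₑ ^ n * ‖𝓕 f ξ‖ₑ) ^ 2 ∂paleyMeasure volume) / ENNReal.ofReal t ^ 2 :=
      meas_ge_le_lintegral_div (by fun_prop) (by simpa using ht) (by simp)
    _ ≤ (∫⁻ ξ, ‖𝓕 f ξ‖ₑ ^ 2) / ENNReal.ofReal t ^ 2 := by
      rw [paleyMeasure, lintegral_withDensity_eq_lintegral_mul _ (by fun_prop) (by fun_prop)]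
      gcongr with ξ
      rw [Pi.mul_apply, mul_pow, ← pow_mul, ← mul_assoc, mul_comm n]
      exact mul_le_of_le_one_left' (ENNReal.inv_mul_le_one _)
    _ = _ := by
      simp only [lintegral_enorm_fourier_sq_s17, div_eq_mul_inv, mul_pow, ← ENNReal.inv_pow]
      rw [lintegral_mul_const' _ _ (by simpa using ht)]

theorem paleyMeasure_lt_norm_pow_mul_norm_fourier_add_le (g h : 𝓢(V, F)) (t : ℝ) :
    paleyMeasure volume {ξ : V | 2 * t < ‖ξ‖ ^ finrank ℝ V * ‖𝓕 (g + h) ξ‖} ≤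
      paleyMeasure volume {ξ : V | t < ‖ξ‖ ^ finrank ℝ V * ‖𝓕 g ξ‖} +
        paleyMeasure volume {ξ : V | t < ‖ξ‖ ^ finrank ℝ V * ‖𝓕 h ξ‖} := by
  refine (measure_mono fun ξ (hξ : 2 * t < _) ↦ ?_).trans (measure_union_le _ _)
  have htri : ‖𝓕 (g + h) ξ‖ ≤ ‖𝓕 g ξ‖ + ‖𝓕 h ξ‖ := by
    simpa only [FourierTransform.fourier_add, add_apply] using norm_add_le _ _
  have hsum := hξ.trans_le (mul_le_mul_of_nonneg_left htri (by positivity))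
  by_contra! hle
  simp only [mem_union, mem_ofPred_eq, not_or, not_lt] at hle
  linarith

variable [Nontrivial V]

theorem paleyMeasure_lt_norm_pow_mul_norm_fourier_le_lintegral (f : 𝓢(V, F)) {t : ℝ}
    (ht : 0 < t) :
    paleyMeasure volume {ξ : V | t < ‖ξ‖ ^ finrank ℝ V * ‖𝓕 f ξ‖} ≤
      volume (ball (0 : V) 1) * ∫⁻ x, ‖f x‖ₑ / ENNReal.ofReal t := by
  set M := ∫ x, ‖f x‖ with hM
  have hfM (ξ : V) : ‖𝓕 f ξ‖ ≤ M :=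
    (f.norm_fourier_apply_le_toLp_one ξ).trans_eq SchwartzMap.norm_toLp_one
  rcases (show 0 ≤ M by positivity).eq_or_lt with hM0 | hM0
  · have hzero (ξ : V) : ‖𝓕 f ξ‖ = 0 := le_antisymm (hM0 ▸ hfM ξ) (norm_nonneg _)
    simp [hzero, ht.not_gt]
  calc
    _ ≤ paleyMeasure volume {ξ : V | t / M < ‖ξ‖ ^ finrank ℝ V} := by
      refine measure_mono fun ξ (hξ : t < _) ↦ ?_
      rw [mem_ofPred_eq, div_lt_iff₀ hM0]
      exact hξ.trans_le (by gcongr; exact hfM ξ)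
    _ = volume (ball (0 : V) 1) * (ENNReal.ofReal M / ENNReal.ofReal t) := by
      rw [paleyMeasure_lt_norm_pow _ (by positivity), div_eq_mul_inv,
        ← ENNReal.ofReal_inv_of_pos (by positivity), inv_div, ENNReal.ofReal_div_of_pos ht]
    _ = _ := by
      rw [hM, ofReal_integral_norm_eq_lintegral_enorm f.integrable]
      simp only [div_eq_mul_inv]
      rw [lintegral_mul_const' _ _ (by simpa using ht)]

theorem paleyMeasure_two_mul_lt_norm_pow_mul_norm_fourier_le [CompleteSpace F] (f : 𝓢(V, F))
    {t : ℝ} (ht : 0 < t) :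
    paleyMeasure volume {ξ : V | 2 * t < ‖ξ‖ ^ finrank ℝ V * ‖𝓕 f ξ‖} ≤
      volume (ball (0 : V) 1) * (∫⁻ x in {x | t < ‖f x‖}, ‖f x‖ₑ / ENNReal.ofReal t) +
        ∫⁻ x in {x | ‖f x‖ < 2 * t}, (‖f x‖ₑ / ENNReal.ofReal t) ^ 2 := by
  obtain ⟨g, h, hgh, hg, hh⟩ := exists_schwartz_add_eq_of_truncation ℂ f ht
  have hfm : Measurable fun x ↦ ‖f x‖ := f.continuous.norm.measurable
  calc
    _ ≤ paleyMeasure volume {ξ : V | t < ‖ξ‖ ^ finrank ℝ V * ‖𝓕 g ξ‖} +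
          paleyMeasure volume {ξ : V | t < ‖ξ‖ ^ finrank ℝ V * ‖𝓕 h ξ‖} := by
      simpa only [hgh] using paleyMeasure_lt_norm_pow_mul_norm_fourier_add_le g h t
    _ ≤ volume (ball (0 : V) 1) * (∫⁻ x, ‖g x‖ₑ / ENNReal.ofReal t) +
          ∫⁻ x, (‖h x‖ₑ / ENNReal.ofReal t) ^ 2 := by
      gcongr
      · exact paleyMeasure_lt_norm_pow_mul_norm_fourier_le_lintegral g ht
      · exact paleyMeasure_lt_norm_pow_mul_norm_fourier_le_lintegral_sq h ht
    _ ≤ _ := by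
      have hdiv : Monotone fun y ↦ y / ENNReal.ofReal t :=
        fun _ _ hab ↦ ENNReal.div_le_div_right hab _
      refine add_le_add (mul_le_mul_right ?_ _) ?_
      · exact lintegral_comp_le_setLIntegral_comp hdiv (by simp)
          (measurableSet_lt measurable_const hfm) hg
      · exact lintegral_comp_le_setLIntegral_comp (hdiv.pow_const 2) (by simp)
          (measurableSet_lt hfm measurable_const) hh

variable [CompleteSpace F] {p : ℝ}

theorem exists_lintegral_paleyMeasure_fourier_rpow_le (hp1 : 1 < p) (hp2 : p < 2) :
    ∃ C : ℝ≥0, ∀ f : 𝓢(V, F),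
      ∫⁻ ξ, ENNReal.ofReal ((‖ξ‖ ^ finrank ℝ V * ‖𝓕 f ξ‖) ^ p) ∂paleyMeasure volume ≤
        C * ∫⁻ x, ‖f x‖ₑ ^ p := by
  have hp0 : 0 < p := by linarith
  let C : ℝ≥0∞ := ENNReal.ofReal (2 ^ p) * (ENNReal.ofReal p *
    (volume (ball (0 : V) 1) * ENNReal.ofReal ((p - 1)⁻¹) +
      1 * ENNReal.ofReal (2 ^ (2 - p) * (2 - p)⁻¹)))
  have hC : C ≠ ∞ := by
    have : volume (ball (0 : V) 1) ≠ ∞ := measure_ball_lt_top.ne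
    finiteness
  refine ⟨C.toNNReal, fun f ↦ ?_⟩
  have hfm : Measurable fun x ↦ ‖f x‖ := f.continuous.norm.measurable
  have hFm : Measurable fun ξ ↦ ‖𝓕 f ξ‖ := (𝓕 f).continuous.norm.measurable
  let v (ξ : V) : ℝ := ‖ξ‖ ^ finrank ℝ V * ‖𝓕 f ξ‖ / 2
  calc
    _ = ENNReal.ofReal (2 ^ p) * ∫⁻ ξ, ENNReal.ofReal (v ξ ^ p) ∂paleyMeasure volume := by
      rw [← lintegral_const_mul' _ _ ENNReal.ofReal_ne_top]
      congr 1 with ξ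
      rw [← ENNReal.ofReal_mul (by positivity), ← mul_rpow two_pos.le (by positivity),
        mul_div_cancel₀ _ two_ne_zero]
    _ ≤ C * ∫⁻ x, ENNReal.ofReal (‖f x‖ ^ p) := by
      rw [mul_assoc]
      gcongr
      refine lintegral_rpow_le_of_meas_lt_le (fun x ↦ norm_nonneg (f x)) hfm
        (fun ξ ↦ by positivity) (by fun_prop) two_pos hp0 hp1 hp2 fun t ht ↦ ?_
      simpa only [v, lt_div_iff₀' (zero_lt_two' ℝ), rpow_one, rpow_two, one_mul,
        ENNReal.ofReal_pow (div_nonneg (norm_nonneg _) ht.le),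
        ENNReal.ofReal_div_of_pos ht, ofReal_norm] using
        paleyMeasure_two_mul_lt_norm_pow_mul_norm_fourier_le f ht
    _ = _ := by
      simp only [ENNReal.coe_toNNReal hC, ← ofReal_norm,
        ENNReal.ofReal_rpow_of_nonneg (norm_nonneg _) hp0.le]

theorem hardy_littlewood_paley (hp1 : 1 < p) (hp2 : p ≤ 2) :
    ∃ C : ℝ≥0, ∀ f : 𝓢(V, F),
      ∫⁻ ξ : V, ‖ξ‖ₑ ^ (-(finrank ℝ V * (2 - p))) * ‖𝓕 f ξ‖ₑ ^ p ≤
        C * ∫⁻ x, ‖f x‖ₑ ^ p := by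
  have hp0 : 0 < p := by linarith
  rcases hp2.eq_or_lt with rfl | hp2
  · exact ⟨1, fun f ↦ by simp [lintegral_enorm_fourier_sq_s17]⟩
  obtain ⟨C, hC⟩ := exists_lintegral_paleyMeasure_fourier_rpow_le (V := V) (F := F) hp1 hp2
  refine ⟨C, fun f ↦ (le_of_eq ?_).trans (hC f)⟩
  have hFm : Measurable fun ξ ↦ ‖𝓕 f ξ‖ := (𝓕 f).continuous.norm.measurable
  rw [paleyMeasure, lintegral_withDensity_eq_lintegral_mul _ (by fun_prop) (by fun_prop)]
  refine lintegral_congr_ae ?_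
  filter_upwards [Measure.ae_ne volume (0 : V)] with ξ hξ
  have hξ0 : ‖ξ‖ₑ ≠ 0 := by simpa using hξ
  have hweight : ‖ξ‖ₑ ^ (-(finrank ℝ V * (2 - p))) =
      (‖ξ‖ₑ ^ (2 * finrank ℝ V))⁻¹ * (‖ξ‖ₑ ^ finrank ℝ V) ^ p := by
    rw [← ENNReal.rpow_natCast, ← ENNReal.rpow_natCast, ← ENNReal.rpow_mul, ← ENNReal.rpow_neg,
      ← ENNReal.rpow_add _ _ hξ0 enorm_ne_top]
    push_cast
    ring_nf
  rw [Pi.mul_apply, hweight, mul_assoc, ← ENNReal.mul_rpow_of_nonneg _ _ hp0.le,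
    ← ofReal_norm_pow_mul_norm, ENNReal.ofReal_rpow_of_nonneg (by positivity) hp0.le]

end HardyLittlewoodPaley

section FourierIntegral

theorem integrable_norm_rpow {V F : Type*} [NormedAddCommGroup V] [NormedSpace ℝ V]
    [MeasurableSpace V] [BorelSpace V] [SecondCountableTopology V] {μ : Measure V}
    [μ.HasTemperateGrowth] [NormedAddCommGroup F] [NormedSpace ℝ F] (f : 𝓢(V, F)) {p : ℝ}
    (hp : 0 < p) : Integrable (fun x ↦ ‖f x‖ ^ p) μ := by
  simpa only [ENNReal.toReal_ofReal hp.le] using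
    (f.memLp (.ofReal p) μ).integrable_norm_rpow (by simpa using hp) ENNReal.ofReal_ne_top

variable {V : Type*} [NormedAddCommGroup V]

theorem ofReal_one_add_norm_sq_rpow_le {x y : V} (hxy : ‖x‖ ≤ ‖y‖) {s r : ℝ} (hs : 0 ≤ s)
    (hsr : s ≤ r) : ENNReal.ofReal ((1 + ‖y‖ ^ 2) ^ (-r / 2)) ≤ ‖x‖ₑ ^ (-s) := by
  have hy : 0 < 1 + ‖y‖ ^ 2 := by positivity
  have hxs : ‖x‖ ^ s ≤ (1 + ‖y‖ ^ 2) ^ (r / 2) := calc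
    _ = (‖x‖ ^ 2) ^ (s / 2) := by
      rw [← rpow_natCast, ← rpow_mul (norm_nonneg x)]
      ring_nf
    _ ≤ (1 + ‖y‖ ^ 2) ^ (s / 2) := by
      gcongr
      linarith [pow_le_pow_left₀ (norm_nonneg x) hxy 2]
    _ ≤ _ := by
      gcongr
      linarith [sq_nonneg ‖y‖]
  rw [neg_div, rpow_neg hy.le, ENNReal.ofReal_inv_of_pos (by positivity), ENNReal.rpow_neg,
    ← ofReal_norm, ENNReal.ofReal_rpow_of_nonneg (norm_nonneg x) hs]
  gcongr

variable [InnerProductSpace ℝ V] [FiniteDimensional ℝ V] [MeasurableSpace V] [BorelSpace V]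
  {F : Type*} [NormedAddCommGroup F]

theorem integral_exp_neg_I_inner_smul_eq_fourier [NormedSpace ℂ F] (f : V → F) (ξ : V) :
    ∫ x, Complex.exp (-Complex.I * (⟪x, ξ⟫ : ℂ)) • f x = 𝓕 f ((2 * π)⁻¹ • ξ) := by
  rw [Real.fourier_eq']
  congr 1 with x
  congr 2
  have : (π : ℂ) ≠ 0 := by exact_mod_cast Real.pi_ne_zero
  rw [real_inner_smul_right]
  push_cast
  field_simp

variable [InnerProductSpace ℂ F] [CompleteSpace F] [Nontrivial V] {p : ℝ}

theorem exists_lintegral_one_add_norm_sq_rpow_mul_fourier_rpow_le (hp1 : 1 < p) (hp2 : p ≤ 2)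
    {r : ℝ} (hr : finrank ℝ V * (2 - p) ≤ r) :
    ∃ C : ℝ≥0, ∀ f : 𝓢(V, F),
      ∫⁻ ξ : V, ENNReal.ofReal ((1 + ‖ξ‖ ^ 2) ^ (-r / 2)) * ‖𝓕 f ((2 * π)⁻¹ • ξ)‖ₑ ^ p ≤
        C * ∫⁻ x, ‖f x‖ₑ ^ p := by
  obtain ⟨C, hC⟩ := hardy_littlewood_paley (V := V) (F := F) hp1 hp2
  refine ⟨((2 * π) ^ finrank ℝ V).toNNReal * C, fun f ↦ ?_⟩
  have hFm : Measurable fun ξ ↦ ‖𝓕 f ξ‖ₑ := (𝓕 f).continuous.enorm.measurable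
  have hcontract (ξ : V) : ‖(2 * π)⁻¹ • ξ‖ ≤ ‖ξ‖ := by
    rw [norm_smul, Real.norm_of_nonneg (by positivity)]
    exact mul_le_of_le_one_left (norm_nonneg ξ) (inv_le_one_of_one_le₀ (by linarith [two_le_pi]))
  calc
    _ ≤ ∫⁻ ξ : V, ‖(2 * π)⁻¹ • ξ‖ₑ ^ (-(finrank ℝ V * (2 - p))) *
          ‖𝓕 f ((2 * π)⁻¹ • ξ)‖ₑ ^ p := by
      gcongr with ξ
      exact ofReal_one_add_norm_sq_rpow_le (hcontract ξ)
        (mul_nonneg (by positivity) (by linarith)) hr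
    _ = ENNReal.ofReal ((2 * π) ^ finrank ℝ V) *
          ∫⁻ ξ : V, ‖ξ‖ₑ ^ (-(finrank ℝ V * (2 - p))) * ‖𝓕 f ξ‖ₑ ^ p := by
      rw [lintegral_comp_smul_s17 volume (r := (2 * π)⁻¹)
        (f := fun ξ ↦ ‖ξ‖ₑ ^ (-(finrank ℝ V * (2 - p))) * ‖𝓕 f ξ‖ₑ ^ p) (by fun_prop)
        (by positivity), inv_pow, inv_inv, abs_of_pos (by positivity)]
    _ ≤ _ := by
      rw [ENNReal.coe_mul, mul_assoc]
      exact mul_le_mul_right (hC f) _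

theorem stmt17_general (hp1 : 1 < p) (hp2 : p ≤ 2) {k : ℝ}
    (hk : 2 * finrank ℝ V * (1 / p - 1 / 2) ≤ k) :
    ∃ C > (0 : ℝ), ∀ f : 𝓢(V, F),
      (∫ ξ : V, (1 + ‖ξ‖ ^ 2) ^ (-(k * p) / 2) *
          ‖∫ x, Complex.exp (-Complex.I * (⟪x, ξ⟫ : ℂ)) • f x‖ ^ p) ^ (1 / p) ≤
        C * (∫ x : V, ‖f x‖ ^ p) ^ (1 / p) := by
  have hp0 : 0 < p := by linarith
  have hkp : finrank ℝ V * (2 - p) ≤ k * p := by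
    calc
      _ = 2 * finrank ℝ V * (1 / p - 1 / 2) * p := by field_simp
      _ ≤ k * p := by gcongr
  obtain ⟨C, hC⟩ := exists_lintegral_one_add_norm_sq_rpow_mul_fourier_rpow_le
    (V := V) (F := F) hp1 hp2 hkp
  refine ⟨(C + 1) ^ (1 / p), by positivity, fun f ↦ ?_⟩
  have hFm : Measurable fun ξ : V ↦ ‖𝓕 f ((2 * π)⁻¹ • ξ)‖ :=
    ((𝓕 f).continuous.comp (continuous_const_smul _)).norm.measurable
  simp only [integral_exp_neg_I_inner_smul_eq_fourier, ← SchwartzMap.fourier_coe]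
  rw [← mul_rpow (by positivity) (by positivity)]
  refine rpow_le_rpow (by positivity) ?_ (by positivity)
  rw [integral_eq_lintegral_of_nonneg_ae (.of_forall fun _ ↦ by positivity)
    (Measurable.aestronglyMeasurable (by fun_prop))]
  refine ENNReal.toReal_le_of_le_ofReal (by positivity) ?_
  calc
    _ = ∫⁻ ξ : V, ENNReal.ofReal ((1 + ‖ξ‖ ^ 2) ^ (-(k * p) / 2)) *
          ‖𝓕 f ((2 * π)⁻¹ • ξ)‖ₑ ^ p := by
      simp only [ENNReal.ofReal_mul' (rpow_nonneg (norm_nonneg _) p), ← ofReal_norm,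
        ENNReal.ofReal_rpow_of_nonneg (norm_nonneg _) hp0.le]
    _ ≤ C * ∫⁻ x, ‖f x‖ₑ ^ p := hC f
    _ = ENNReal.ofReal (C * ∫ x, ‖f x‖ ^ p) := by
      rw [ENNReal.ofReal_mul C.coe_nonneg, ENNReal.ofReal_coe_nnreal,
        ofReal_integral_eq_lintegral_ofReal (integrable_norm_rpow f hp0)
          (.of_forall fun _ ↦ by positivity)]
      simp only [← ofReal_norm, ENNReal.ofReal_rpow_of_nonneg (norm_nonneg _) hp0.le]
    _ ≤ _ := by
      gcongr
      exact le_add_of_nonneg_right zero_le_one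

end FourierIntegral

/-- the Hardy–Littlewood–Paley type inequality: for `1 < p ≤ 2` and
`k = 2d(1/p - 1/2)`, `(∫ (1+|ξ|²)^{-kp/2} |ℱf(ξ)|^p dξ)^{1/p} ≤ C·‖f‖_{L^p(ℝ^d)}`. -/
theorem stmt17 (d : ℕ) (hd : 1 ≤ d) (p : ℝ) (hp1 : 1 < p) (hp2 : p ≤ 2)
    (k : ℝ) (hk : k = 2 * d * (1 / p - 1 / 2)) :
    ∃ C > (0 : ℝ), ∀ f : SchwartzMap (E d) ℂ,
      (∫ ξ : E d, (1 + ‖ξ‖ ^ 2) ^ (-(k * p) / 2) * ‖FT d (⇑f) ξ‖ ^ p) ^ (1 / p) ≤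
        C * (∫ x : E d, ‖f x‖ ^ p) ^ (1 / p) := by
  have : Nonempty (Fin d) := ⟨⟨0, hd⟩⟩
  exact stmt17_general hp1 hp2 (by rw [finrank_euclideanSpace_fin, hk])
end
end
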